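/- arXiv:2108.12220 — 7 statements merged into one kernel-verified Lean document; each statement's English description precedes it below -/
import Mathlib

section
/- Let α be purely imaginary and let u : ℝ → ℂ be twice continuously differentiable and satisfy the PII equation u''(x) = x·u(x) + 2·u(x)³ − α on ℝ. Assume there exists R > 0 such that |u(y)| ≤ |y|^{−1/4} for all y ≤ −R. Then there exists a constant C > 0 such that |u'(x)| ≤ C·(1 + |x|^{1/4}) for all x ≤ 0. -/
/-!
The bound is a Landau-type interpolation between `u` and `u''`. At a point `x ≤ -max R 1`, put
`t = |x|^{1/4} ≥ 1` and look at the interval `[x - h, x]` of length `h = t⁻²`. There `|u| ≤ 1/t`,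
and the equation gives `|u''| ≤ (4 + |α|) t³`. The estimate
`h |u'(x)| ≤ 2 sup |u| + h² sup |u''|` (`norm_deriv_mul_le`) then yields
`|u'(x)| ≤ 2t + (4 + |α|) t`. On the remaining compact interval `u'` is bounded by continuity.
-/

/-- Landau-type interpolation: on an interval of length `h`, bounds on `u` and `u''` control `u'`
at the right endpoint. -/
lemma norm_deriv_mul_le {u : ℝ → ℂ} (hu : ContDiff ℝ 2 u) {x h B K : ℝ} (hh : 0 ≤ h)
    (hB : ∀ y ∈ Set.Icc (x - h) x, ‖u y‖ ≤ B)
    (hK : ∀ y ∈ Set.Icc (x - h) x, ‖deriv (deriv u) y‖ ≤ K) :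
    h * ‖deriv u x‖ ≤ 2 * B + h * (K * h) := by
  have hd : Differentiable ℝ u := hu.differentiable (by norm_num)
  have hu' : ContDiff ℝ 1 (deriv u) := by
    have : ContDiff ℝ (1 + 1) u := by simpa [one_add_one_eq_two] using hu
    exact (contDiff_succ_iff_deriv.1 this).2.2
  have hd' : Differentiable ℝ (deriv u) := hu'.differentiable (by norm_num)
  have hx : x ∈ Set.Icc (x - h) x := ⟨by linarith, le_rfl⟩
  have hxh : x - h ∈ Set.Icc (x - h) x := ⟨le_rfl, by linarith⟩
  have hK0 : 0 ≤ K := (norm_nonneg _).trans (hK x hx)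
  have h1 : ∀ y ∈ Set.Icc (x - h) x, ‖deriv u y - deriv u x‖ ≤ K * h := by
    intro y hy
    have := (convex_Icc (x - h) x).norm_image_sub_le_of_norm_deriv_le
      (fun z _ => hd' z) hK hx hy
    refine this.trans (mul_le_mul_of_nonneg_left ?_ hK0)
    rw [Real.norm_eq_abs, abs_le]
    constructor <;> linarith [hy.1, hy.2]
  -- The mean value inequality for `y ↦ u y - y • u' x`, whose derivative is `u' y - u' x`.
  have h2 := (convex_Icc (x - h) x).norm_image_sub_le_of_norm_hasDerivWithin_le
    (f := fun y => u y - y • deriv u x) (f' := fun y => deriv u y - deriv u x) (C := K * h)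
    (fun y _ => by
      have := ((hd y).hasDerivAt.fun_sub ((hasDerivAt_id y).smul_const (deriv u x)))
      simpa using this.hasDerivWithinAt) h1 hxh hx
  rw [show x - (x - h) = h by ring, Real.norm_eq_abs, abs_of_nonneg hh] at h2
  have h3 : h • deriv u x
      = u x - u (x - h) - ((u x - x • deriv u x) - (u (x - h) - (x - h) • deriv u x)) := by
    simp only [Complex.real_smul]; push_cast; ring
  calc h * ‖deriv u x‖ = ‖h • deriv u x‖ := by
        rw [norm_smul, Real.norm_eq_abs, abs_of_nonneg hh]
    _ ≤ ‖u x‖ + ‖u (x - h)‖ + K * h * h := by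
        rw [h3]
        exact (norm_sub_le _ _).trans (add_le_add (norm_sub_le _ _) h2)
    _ ≤ 2 * B + h * (K * h) := by linarith [hB x hx, hB _ hxh]

/-- If `u` solves PII with purely imaginary `α` and satisfies
`|u(y)| ≤ |y|^{-1/4}` for `y ≤ -R`, then `|u'(x)| ≤ C (1 + |x|^{1/4})` for `x ≤ 0`. -/
theorem stmt_1 (α : ℂ) (hα : α.re = 0) (u : ℝ → ℂ)
    (hu : ContDiff ℝ 2 u)
    (hP : ∀ x : ℝ, deriv (deriv u) x = (x : ℂ) * u x + 2 * (u x) ^ 3 - α)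
    (hdec : ∃ R : ℝ, 0 < R ∧ ∀ y : ℝ, y ≤ -R → ‖u y‖ ≤ |y| ^ (-(1:ℝ)/4)) :
    ∃ C : ℝ, 0 < C ∧ ∀ x : ℝ, x ≤ 0 → ‖deriv u x‖ ≤ C * (1 + |x| ^ ((1:ℝ)/4)) := by
  obtain ⟨R, hR, hdec⟩ := hdec
  have hcont : Continuous (deriv u) := hu.continuous_deriv (by norm_num)
  obtain ⟨D, hD⟩ := (isCompact_Icc (a := -max R 1) (b := (0 : ℝ))).exists_bound_of_continuousOn
    hcont.continuousOn
  have hα0 := norm_nonneg α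
  refine ⟨|D| + 6 + ‖α‖, by positivity, fun x hx => ?_⟩
  have ht0 : 0 ≤ |x| ^ ((1:ℝ)/4) := by positivity
  by_cases hxM : -max R 1 ≤ x
  · have h1 := (hD x ⟨hxM, hx⟩).trans (le_abs_self D)
    nlinarith [abs_nonneg D, mul_nonneg (abs_nonneg D) ht0, mul_nonneg hα0 ht0]
  push Not at hxM
  have hxR : x ≤ -R := by linarith [le_max_left R 1]
  have hx1 : 1 ≤ |x| := by rw [abs_of_nonpos hx]; linarith [le_max_right R 1]
  set t := |x| ^ ((1:ℝ)/4) with ht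
  have ht1 : 1 ≤ t := Real.one_le_rpow hx1 (by norm_num)
  have htp : 0 < t := by linarith
  have ht4 : t ^ 4 = |x| := by
    rw [ht, ← Real.rpow_natCast, ← Real.rpow_mul (abs_nonneg x)]; norm_num
  have hinv : |x| ^ (-(1:ℝ)/4) = t⁻¹ := by
    rw [ht, ← Real.rpow_neg (abs_nonneg x)]; norm_num
  have hti : t⁻¹ ≤ 1 := inv_le_one_of_one_le₀ ht1
  have hti0 : 0 < t⁻¹ := by positivity
  have hh1 : t⁻¹ ^ 2 ≤ 1 := pow_le_one₀ hti0.le hti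
  have hB : ∀ y ∈ Set.Icc (x - t⁻¹ ^ 2) x, ‖u y‖ ≤ t⁻¹ := by
    intro y hy
    rw [← hinv]
    refine (hdec y (hy.2.trans hxR)).trans ?_
    refine Real.rpow_le_rpow_of_nonpos (by linarith) ?_ (by norm_num)
    rw [abs_of_nonpos hx, abs_of_nonpos (hy.2.trans hx)]
    linarith [hy.2]
  have ht3 : 1 ≤ t ^ 3 := one_le_pow₀ ht1
  have hK : ∀ y ∈ Set.Icc (x - t⁻¹ ^ 2) x, ‖deriv (deriv u) y‖ ≤ (4 + ‖α‖) * t ^ 3 := by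
    intro y hy
    have hb := hB y hy
    -- `|y| ≤ |x| + h ≤ 2 |x|`, as `h ≤ 1 ≤ |x|`.
    have hy2 : |y| ≤ 2 * t ^ 4 := by
      rw [ht4]
      have := hy.1
      rw [abs_of_nonpos hx] at *
      rw [abs_of_nonpos (hy.2.trans hx)]
      linarith
    have e1 : ‖(y : ℂ) * u y‖ ≤ 2 * t ^ 3 := by
      rw [norm_mul, Complex.norm_real, Real.norm_eq_abs]
      calc |y| * ‖u y‖ ≤ (2 * t ^ 4) * t⁻¹ := by gcongr
        _ = 2 * t ^ 3 := by field_simp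
    have e2 : ‖2 * (u y) ^ 3‖ ≤ 2 := by
      rw [norm_mul, norm_pow, Complex.norm_ofNat]
      linarith [pow_le_one₀ (n := 3) (norm_nonneg (u y)) (hb.trans hti)]
    rw [hP y]
    have e3 := (norm_sub_le ((y : ℂ) * u y + 2 * (u y) ^ 3) α).trans
      (add_le_add_left ((norm_add_le _ _).trans (add_le_add e1 e2)) _)
    nlinarith
  have key := norm_deriv_mul_le hu (by positivity) hB hK
  have key2 : ‖deriv u x‖ ≤ (6 + ‖α‖) * t := by
    have := mul_le_mul_of_nonneg_left key (sq_nonneg t)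
    have l : t ^ 2 * (t⁻¹ ^ 2 * ‖deriv u x‖) = ‖deriv u x‖ := by field_simp
    have r : t ^ 2 * (2 * t⁻¹ + t⁻¹ ^ 2 * ((4 + ‖α‖) * t ^ 3 * t⁻¹ ^ 2)) = (6 + ‖α‖) * t := by
      field_simp; ring
    rwa [l, r] at this
  nlinarith [abs_nonneg D, mul_nonneg (abs_nonneg D) ht0]
end

section
/- Let μ ∈ ℝ, set α := −iμ/2, and let u : ℝ → ℂ be a smooth solution of the PII equation u''(x) = x·u(x) + 2·u(x)³ − α on ℝ such that u(x) is purely imaginary for every x ∈ ℝ. Define w : ℝ → ℂ by w(x) := ∫₀ˣ exp( (2/3^{1/3}) ∫₀^y u(z/3^{1/3}) dz ) dy − C, where C := (2·3^{1/3}/(1−iμ))·(u'(0) − u(0)²). Then |w'(x)| = 1 for all x ∈ ℝ, and w satisfies the ordinary differential equation ((1−iμ)/3)·w(x) − (x/3)·w'(x) = −w'''(x) + (3/2)·conj(w'(x))·w''(x)² for all x ∈ ℝ. -/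
/-!
Write `k = 3^{1/3}` and `E = w'`. The fundamental theorem of calculus gives
`E = exp((2/k) ∫₀ˣ u(z/k) dz)`, so `|E| = 1` because the exponent is purely imaginary, and
`E' = (2/k) u(x/k) E`. With `conj(E) E = 1` the right-hand side of the equation for `w` collapses
to `(2/k²) (u² - u')(x/k) E`. The difference `G` of the two sides is then constant: its derivative
vanishes by PII and `k³ = 3`. The constant `C` is exactly the one for which `G(0) = 0`.
-/

/-- The real cube root of 3. -/
noncomputable def cbrt3 : ℝ := (3 : ℝ) ^ ((1:ℝ)/3)

theorem cbrt3_pos : 0 < cbrt3 := by unfold cbrt3; positivity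

theorem cbrt3_pow : cbrt3 ^ 3 = 3 := by
  unfold cbrt3
  rw [← Real.rpow_natCast, ← Real.rpow_mul (by norm_num)]
  norm_num

/-- The function `w` built from a purely imaginary solution of PII with `α = -iμ/2`
satisfies `|w'| = 1` and the self-similar ODE
`((1-iμ)/3) w - (x/3) w' = -w''' + (3/2) conj(w') (w'')²`. -/
theorem stmt_2 (μ : ℝ) (α : ℂ) (hα : α = -Complex.I * μ / 2)
    (u : ℝ → ℂ) (hu : ContDiff ℝ (⊤ : ℕ∞) u)
    (hP : ∀ x : ℝ, deriv (deriv u) x = (x : ℂ) * u x + 2 * (u x) ^ 3 - α)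
    (him : ∀ x : ℝ, (u x).re = 0)
    (Cc : ℂ)
    (hC : Cc = (2 * cbrt3 / (1 - Complex.I * μ)) * (deriv u 0 - (u 0) ^ 2))
    (w : ℝ → ℂ)
    (hw : ∀ x : ℝ, w x =
      (∫ y in (0:ℝ)..x, Complex.exp (((2 / cbrt3 : ℝ) : ℂ) *
        ∫ z in (0:ℝ)..y, u (z / cbrt3))) - Cc) :
    (∀ x : ℝ, ‖deriv w x‖ = 1) ∧
    ∀ x : ℝ, ((1 - Complex.I * μ) / 3) * w x - ((x : ℂ) / 3) * deriv w x =
      -(deriv (deriv (deriv w)) x) +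
        (3/2) * (starRingEnd ℂ) (deriv w x) * (deriv (deriv w) x) ^ 2 := by
  have hkpos := cbrt3_pos
  have hk3 : (cbrt3 : ℂ) ^ 3 = 3 := by exact_mod_cast cbrt3_pow
  have hk0 : (cbrt3 : ℂ) ≠ 0 := by exact_mod_cast hkpos.ne'
  generalize cbrt3 = k at *
  have hμ : (1 - Complex.I * μ : ℂ) ≠ 0 := by
    intro h
    have := congrArg Complex.re h
    simp at this
  have hucont : Continuous u := hu.continuous
  have hu1 : ∀ x, HasDerivAt u (deriv u x) x := fun x =>
    (hu.differentiable (by simp) x).hasDerivAt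
  have hdu : ContDiff ℝ 1 (deriv u) :=
    (contDiff_infty_iff_deriv.1 hu).2.of_le (by exact_mod_cast le_top)
  have hu2 : ∀ x, HasDerivAt (deriv u) (deriv (deriv u) x) x := fun x =>
    (hdu.differentiable (by simp) x).hasDerivAt
  have hs : ∀ x : ℝ, HasDerivAt (fun y : ℝ => y / k) (1 / k) x := fun x =>
    (hasDerivAt_id x).div_const k
  have hcont : Continuous fun z : ℝ => u (z / k) := by fun_prop
  have hv : ∀ x : ℝ, HasDerivAt (fun y : ℝ => u (y / k)) (deriv u (x / k) / k) x := by
    intro x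
    have := (hu1 (x / k)).scomp x (hs x)
    refine this.congr_deriv ?_
    rw [Complex.real_smul]; push_cast; ring
  have hv' : ∀ x : ℝ, HasDerivAt (fun y : ℝ => deriv u (y / k))
      (deriv (deriv u) (x / k) / k) x := by
    intro x
    have := (hu2 (x / k)).scomp x (hs x)
    refine this.congr_deriv ?_
    rw [Complex.real_smul]; push_cast; ring
  set U : ℝ → ℂ := fun y => ∫ z in (0:ℝ)..y, u (z / k) with hU
  have hU' : ∀ y, HasDerivAt U (u (y / k)) y := fun y =>
    (hcont.integral_hasStrictDerivAt 0 y).hasDerivAt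
  have hUre : ∀ y, (U y).re = 0 := by
    intro y
    have := Complex.reCLM.intervalIntegral_comp_comm
      (hcont.intervalIntegrable (μ := MeasureTheory.volume) 0 y)
    simp only [Complex.reCLM_apply, him, intervalIntegral.integral_zero] at this
    exact this.symm
  set E : ℝ → ℂ := fun y => Complex.exp (((2 / k : ℝ) : ℂ) * U y) with hE
  have hE' : ∀ y, HasDerivAt E (2 / k * u (y / k) * E y) y := by
    intro y
    refine ((hU' y).const_mul (((2 / k : ℝ) : ℂ))).cexp.congr_deriv ?_
    simp only [hE]; push_cast; ring
  have hEnorm : ∀ y, ‖E y‖ = 1 := by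
    intro y
    simp only [hE, Complex.norm_exp, Complex.re_ofReal_mul, hUre, mul_zero, Real.exp_zero]
  have hEcont : Continuous E :=
    continuous_iff_continuousAt.2 fun y => (hE' y).continuousAt
  have hw' : ∀ x, HasDerivAt w (E x) x := by
    intro x
    have h := ((hEcont.integral_hasStrictDerivAt 0 x).hasDerivAt).sub_const Cc
    have hwf : w = fun x => (∫ y in (0:ℝ)..x, E y) - Cc := funext hw
    rw [hwf]; exact h
  have hd1 : deriv w = E := funext fun x => (hw' x).deriv
  have hd2 : deriv E = fun y : ℝ => 2 / k * u (y / k) * E y := funext fun x => (hE' x).deriv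
  have hE'' : ∀ x : ℝ, HasDerivAt (fun y : ℝ => 2 / (k : ℂ) * u (y / k) * E y)
      (2 / k * (deriv u (x / k) / k) * E x + 2 / k * u (x / k) * (2 / k * u (x / k) * E x)) x :=
    fun x => ((hv x).const_mul (2 / (k : ℂ))).mul (hE' x)
  rw [hd1, hd2]
  refine ⟨hEnorm, fun x => ?_⟩
  rw [(hE'' x).deriv]
  have hconj : (starRingEnd ℂ) (E x) * E x = 1 := by
    rw [mul_comm, Complex.mul_conj, Complex.normSq_eq_norm_sq, hEnorm]; simp
  set G : ℝ → ℂ := fun x => ((1 - Complex.I * μ) / 3) * w x - ((x : ℂ) / 3) * E x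
    - 2 / (k : ℂ) ^ 2 * ((u (x / k) ^ 2 - deriv u (x / k)) * E x) with hG
  have hG' : ∀ x, HasDerivAt G 0 x := by
    intro x
    have h := (((hw' x).const_mul ((1 - Complex.I * μ) / 3)).sub
      (((Complex.ofRealCLM.hasDerivAt (x := x)).div_const 3).mul (hE' x))).sub
      (((((hv x).pow 2).sub (hv' x)).mul (hE' x)).const_mul (2 / (k : ℂ) ^ 2))
    refine h.congr_deriv ?_
    simp only [Pi.pow_apply, Pi.sub_apply, Complex.ofRealCLM_apply]
    rw [hP, hα]
    push_cast
    generalize E x = e, u (x / k) = a, deriv u (x / k) = b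
    field_simp
    simp only [hk3]
    ring_nf
  have hG0 : G x = 0 := by
    have hc : G x = G 0 :=
      is_const_of_deriv_eq_zero (fun y => (hG' y).differentiableAt) (fun y => (hG' y).deriv) x 0
    rw [hc]
    have hE0 : E 0 = 1 := by simp [hE, hU]
    have hw0 : w 0 = -Cc := by rw [hw]; simp
    simp only [hG, hE0, hw0, hC, zero_div]
    push_cast
    field_simp
    linear_combination (2 * (u 0 ^ 2 - deriv u 0)) * hk3
  simp only [hG] at hG0
  linear_combination hG0 + 6 / (k : ℂ) ^ 2 * u (x / k) ^ 2 * E x * (-hconj)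
end

section
/- Let α be purely imaginary and let u : ℝ → ℂ be twice continuously differentiable, satisfy the PII equation u''(x) = x·u(x) + 2·u(x)³ − α on ℝ, take purely imaginary values on ℝ, and satisfy the asymptotic expansion (A+): there exist x₀, K > 0 such that |u(x) − α/x − 2α(1−α²)·x^{−4} − 4α(1−α²)(10−3α²)·x^{−7}| ≤ K·x^{−10} for all x ≥ x₀. Define v(x) := (2/3^{1/3})·u(x/3^{1/3}). Then lim_{x→+∞} u'(x) = 0, and v'(x) = −2α·x^{−2} − 48α(1−α²)·x^{−5} + O(x^{−8}) as x → +∞. -/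
/-- Landau's inequality on `[x, x + 1]`: bounds on a function and its second derivative bound the
first derivative. -/
lemma norm_deriv_le_of_unit_interval {w w' w'' : ℝ → ℂ} {x A B : ℝ}
    (h1 : ∀ t ∈ Set.Icc x (x + 1), HasDerivAt w (w' t) t)
    (h2 : ∀ t ∈ Set.Icc x (x + 1), HasDerivAt w' (w'' t) t)
    (hA : ∀ t ∈ Set.Icc x (x + 1), ‖w t‖ ≤ A)
    (hB : ∀ t ∈ Set.Icc x (x + 1), ‖w'' t‖ ≤ B) :
    ‖w' x‖ ≤ 2 * A + B := by
  have hx : x ∈ Set.Icc x (x + 1) := ⟨le_rfl, by linarith⟩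
  have hx1 : x + 1 ∈ Set.Icc x (x + 1) := ⟨by linarith, le_rfl⟩
  have hB0 : 0 ≤ B := (norm_nonneg _).trans (hB x hx)
  have hconv : Convex ℝ (Set.Icc x (x + 1)) := convex_Icc x (x + 1)
  have hd : ∀ t ∈ Set.Icc x (x + 1), ‖w' t - w' x‖ ≤ B := by
    intro t ht
    have := hconv.norm_image_sub_le_of_norm_hasDerivWithin_le
      (fun s hs => (h2 s hs).hasDerivWithinAt) hB hx ht
    refine this.trans ?_
    have h3 : ‖t - x‖ ≤ 1 := by
      rw [Real.norm_eq_abs, abs_le]; constructor <;> linarith [ht.1, ht.2]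
    nlinarith
  -- The mean value inequality for `t ↦ w t - t * w' x`, whose derivative is `w' t - w' x`.
  have hg : ∀ t ∈ Set.Icc x (x + 1),
      HasDerivWithinAt (fun t : ℝ => w t - (t : ℂ) * w' x) (w' t - w' x) (Set.Icc x (x + 1)) t := by
    intro t ht
    have h4 : HasDerivAt (fun t : ℝ => (t : ℂ) * w' x) (1 * w' x) t :=
      (Complex.ofRealCLM.hasDerivAt (x := t)).mul_const (w' x)
    rw [one_mul] at h4
    exact ((h1 t ht).sub h4).hasDerivWithinAt
  have h5 := hconv.norm_image_sub_le_of_norm_hasDerivWithin_le hg hd hx hx1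
  have h6 : w' x = w (x + 1) - w x
      - ((w (x + 1) - ((x + 1 : ℝ) : ℂ) * w' x) - (w x - (x : ℂ) * w' x)) := by
    push_cast; ring
  have h7 : ‖x + 1 - x‖ = 1 := by simp
  rw [h7, mul_one] at h5
  rw [h6]
  refine (norm_sub_le _ _).trans ?_
  have := norm_sub_le (w (x + 1)) (w x)
  linarith [hA x hx, hA (x + 1) hx1]

/-- `x⁹ w''(x)` written as a polynomial in `s = x⁻¹` and `e = x¹⁰ w(x)`. -/
noncomputable def painleveResidual (α : ℂ) (s e : ℂ) : ℂ :=
  e + 2 * (3 * α ^ 2 * (4 * α * (1 - α ^ 2) * (10 - 3 * α ^ 2) + s ^ 3 * e)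
    + 3 * α * (2 * α * (1 - α ^ 2)
      + s ^ 3 * (4 * α * (1 - α ^ 2) * (10 - 3 * α ^ 2) + s ^ 3 * e)) ^ 2
    + s ^ 3 * (2 * α * (1 - α ^ 2)
      + s ^ 3 * (4 * α * (1 - α ^ 2) * (10 - 3 * α ^ 2) + s ^ 3 * e)) ^ 3)
    - 56 * (4 * α * (1 - α ^ 2) * (10 - 3 * α ^ 2))

/-- If `u = P + s¹⁰ e` with `s = x⁻¹`, then `x u + 2 u³ - α - P''` is divisible by `s⁹`: the terms
of order `s⁰`, `s³` and `s⁶` cancel. -/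
lemma residual_identity (α x s e U : ℂ) (hx : x * s = 1)
    (hU : U = α * s + 2 * α * (1 - α ^ 2) * s ^ 4
      + 4 * α * (1 - α ^ 2) * (10 - 3 * α ^ 2) * s ^ 7 + s ^ 10 * e) :
    x * U + 2 * U ^ 3 - α - (2 * α * s ^ 3 + 20 * (2 * α * (1 - α ^ 2)) * s ^ 6
      + 56 * (4 * α * (1 - α ^ 2) * (10 - 3 * α ^ 2)) * s ^ 9) = s ^ 9 * painleveResidual α s e := by
  have h1 : x * U = α + 2 * α * (1 - α ^ 2) * s ^ 3
      + 4 * α * (1 - α ^ 2) * (10 - 3 * α ^ 2) * s ^ 6 + s ^ 9 * e := by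
    rw [hU]
    linear_combination (α + 2 * α * (1 - α ^ 2) * s ^ 3
      + 4 * α * (1 - α ^ 2) * (10 - 3 * α ^ 2) * s ^ 6 + s ^ 9 * e) * hx
  rw [h1, hU, painleveResidual]
  ring

lemma residual_bounded (α : ℂ) (K : ℝ) :
    ∃ C : ℝ, ∀ s e : ℂ, ‖s‖ ≤ 1 → ‖e‖ ≤ K → ‖painleveResidual α s e‖ ≤ C := by
  have hc : IsCompact (Metric.closedBall (0 : ℂ) 1 ×ˢ Metric.closedBall (0 : ℂ) K) :=
    (isCompact_closedBall _ _).prod (isCompact_closedBall _ _)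
  have hf : Continuous (fun p : ℂ × ℂ => painleveResidual α p.1 p.2) := by
    unfold painleveResidual; fun_prop
  obtain ⟨C, hC⟩ := hc.exists_bound_of_continuousOn hf.continuousOn
  exact ⟨C, fun s e hs he => hC (s, e) ⟨by simpa using hs, by simpa using he⟩⟩

lemma hasDerivAt_ofReal_zpow (n : ℤ) {x : ℝ} (hx : x ≠ 0) :
    HasDerivAt (fun t : ℝ => (t : ℂ) ^ n) ((n : ℂ) * (x : ℂ) ^ (n - 1)) x :=
  (hasDerivAt_zpow n (x : ℂ) (Or.inl (by exact_mod_cast hx))).comp_ofReal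

/-- The expansion of `u` may be differentiated: `u' = -α x⁻² - 4 c₄ x⁻⁵ + O(x⁻⁸)`. -/
lemma deriv_expansion (α : ℂ) (u : ℝ → ℂ) (hu : ContDiff ℝ 2 u)
    (hP : ∀ x : ℝ, deriv (deriv u) x = (x : ℂ) * u x + 2 * (u x) ^ 3 - α)
    (hAp : ∃ x₀ : ℝ, 0 < x₀ ∧ ∃ K : ℝ, 0 < K ∧ ∀ x : ℝ, x₀ ≤ x →
      ‖u x - α / x - 2 * α * (1 - α ^ 2) * (x : ℂ) ^ (-4 : ℤ)
        - 4 * α * (1 - α ^ 2) * (10 - 3 * α ^ 2) * (x : ℂ) ^ (-7 : ℤ)‖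
        ≤ K * x ^ (-10 : ℤ)) :
    ∃ X : ℝ, 1 ≤ X ∧ ∃ C : ℝ, 0 < C ∧ ∀ x : ℝ, X ≤ x →
      ‖deriv u x - (-α * (x : ℂ) ^ (-2 : ℤ)
        - 8 * α * (1 - α ^ 2) * (x : ℂ) ^ (-5 : ℤ))‖ ≤ C * x ^ (-8 : ℤ) := by
  obtain ⟨x₀, hx₀, K, hK, hA⟩ := hAp
  obtain ⟨C, hC⟩ := residual_bounded α K
  set c₄ : ℂ := 2 * α * (1 - α ^ 2) with hc₄
  set c₇ : ℂ := 4 * α * (1 - α ^ 2) * (10 - 3 * α ^ 2) with hc₇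
  set w : ℝ → ℂ := fun t => u t - α * (t : ℂ) ^ (-1 : ℤ) - c₄ * (t : ℂ) ^ (-4 : ℤ)
    - c₇ * (t : ℂ) ^ (-7 : ℤ) with hw
  set w' : ℝ → ℂ := fun t => deriv u t + α * (t : ℂ) ^ (-2 : ℤ) + 4 * c₄ * (t : ℂ) ^ (-5 : ℤ)
    + 7 * c₇ * (t : ℂ) ^ (-8 : ℤ) with hw'
  set w'' : ℝ → ℂ := fun t => deriv (deriv u) t - 2 * α * (t : ℂ) ^ (-3 : ℤ)
    - 20 * c₄ * (t : ℂ) ^ (-6 : ℤ) - 56 * c₇ * (t : ℂ) ^ (-9 : ℤ) with hw''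
  have hu1 : Differentiable ℝ u := hu.differentiable (by norm_num)
  have hu2 : Differentiable ℝ (deriv u) :=
    ((contDiff_succ_iff_deriv (n := 1)).1 (by simpa [one_add_one_eq_two] using hu)).2.2.differentiable
      (by norm_num)
  have h1 : ∀ t : ℝ, 0 < t → HasDerivAt w (w' t) t := by
    intro t ht
    have := (((hu1 t).hasDerivAt.sub ((hasDerivAt_ofReal_zpow (-1) ht.ne').const_mul α)).sub
      ((hasDerivAt_ofReal_zpow (-4) ht.ne').const_mul c₄)).sub
      ((hasDerivAt_ofReal_zpow (-7) ht.ne').const_mul c₇)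
    refine this.congr_deriv ?_
    simp only [hw']
    norm_num
    ring
  have h2 : ∀ t : ℝ, 0 < t → HasDerivAt w' (w'' t) t := by
    intro t ht
    have := (((hu2 t).hasDerivAt.add ((hasDerivAt_ofReal_zpow (-2) ht.ne').const_mul α)).add
      ((hasDerivAt_ofReal_zpow (-5) ht.ne').const_mul (4 * c₄))).add
      ((hasDerivAt_ofReal_zpow (-8) ht.ne').const_mul (7 * c₇))
    refine this.congr_deriv ?_
    simp only [hw'']
    norm_num
    ring
  have hwb : ∀ t : ℝ, x₀ ≤ t → ‖w t‖ ≤ K * t ^ (-10 : ℤ) := by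
    intro t ht
    have := hA t ht
    simpa only [hw, zpow_neg_one, div_eq_mul_inv] using this
  have hwb2 : ∀ t : ℝ, x₀ ≤ t → 1 ≤ t → ‖w'' t‖ ≤ C * t ^ (-9 : ℤ) := by
    intro t ht ht1
    have ht0 : (0 : ℝ) < t := by linarith
    have htc : (t : ℂ) ≠ 0 := by exact_mod_cast ht0.ne'
    have hs : ‖((t : ℂ))⁻¹‖ ≤ 1 := by
      rw [norm_inv, Complex.norm_real, Real.norm_of_nonneg ht0.le]
      exact inv_le_one_of_one_le₀ ht1
    have he : ‖(t : ℂ) ^ 10 * w t‖ ≤ K := by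
      rw [norm_mul, norm_pow, Complex.norm_real, Real.norm_of_nonneg ht0.le]
      calc t ^ 10 * ‖w t‖ ≤ t ^ 10 * (K * t ^ (-10 : ℤ)) := by gcongr; exact hwb t ht
        _ = K := by rw [zpow_neg]; norm_cast; field_simp
    have hz : ∀ n : ℕ, (t : ℂ) ^ (-(n : ℤ)) = ((t : ℂ)⁻¹) ^ n := by
      intro n; rw [zpow_neg, zpow_natCast, inv_pow]
    have hid := residual_identity α t (t : ℂ)⁻¹ ((t : ℂ) ^ 10 * w t) (u t)
      (mul_inv_cancel₀ htc) (by
        have e1 := hz 1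
        have e4 := hz 4
        have e7 := hz 7
        have e10 : ((t : ℂ)⁻¹) ^ 10 * ((t : ℂ) ^ 10 * w t) = w t := by field_simp
        push_cast at e1 e4 e7
        rw [e10, ← e4, ← e7]
        simp only [hw, hc₄, hc₇, zpow_neg_one]
        ring)
    have e3 := hz 3
    have e6 := hz 6
    have e9 := hz 9
    push_cast at e3 e6 e9
    have hww : w'' t = ((t : ℂ)⁻¹) ^ 9 * painleveResidual α (t : ℂ)⁻¹ ((t : ℂ) ^ 10 * w t) := by
      rw [← hid]
      simp only [hw'', hP t, e3, e6, e9, hc₄, hc₇]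
      ring
    have e9r : t ^ (-9 : ℤ) = (t⁻¹) ^ 9 := by
      rw [zpow_neg, inv_pow]; norm_cast
    rw [hww, e9r, norm_mul, norm_pow, norm_inv, Complex.norm_real, Real.norm_of_nonneg ht0.le,
      mul_comm C]
    gcongr
    exact hC _ _ hs he
  have hC0 : 0 ≤ C := (norm_nonneg _).trans (hC 0 0 (by simp) (by simpa using hK.le))
  refine ⟨max x₀ 1, le_max_right _ _, 2 * K + C + 7 * ‖c₇‖, by positivity, fun x hx => ?_⟩
  have hxx₀ : x₀ ≤ x := (le_max_left _ _).trans hx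
  have hx1 : 1 ≤ x := (le_max_right _ _).trans hx
  have hx0 : 0 < x := by linarith
  have hdec : ∀ (n : ℕ) (t : ℝ), 8 ≤ n → x ≤ t → t ^ (-(n : ℤ)) ≤ x ^ (-8 : ℤ) := by
    intro n t hn ht
    calc t ^ (-(n : ℤ)) ≤ t ^ (-8 : ℤ) := zpow_le_zpow_right₀ (by linarith) (by omega)
      _ ≤ x ^ (-8 : ℤ) := by
        rw [zpow_neg, zpow_neg]; gcongr; norm_num; gcongr
  have hL := norm_deriv_le_of_unit_interval (x := x) (A := K * x ^ (-8 : ℤ))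
    (B := C * x ^ (-8 : ℤ)) (w := w) (w' := w') (w'' := w'')
    (fun t ht => h1 t (by linarith [ht.1])) (fun t ht => h2 t (by linarith [ht.1]))
    (fun t ht => (hwb t (hxx₀.trans ht.1)).trans
      (mul_le_mul_of_nonneg_left (hdec 10 t (by norm_num) ht.1) hK.le))
    (fun t ht => (hwb2 t (hxx₀.trans ht.1) (hx1.trans ht.1)).trans
      (mul_le_mul_of_nonneg_left (hdec 9 t (by norm_num) ht.1) hC0))
  have hrw : deriv u x - (-α * (x : ℂ) ^ (-2 : ℤ) - 8 * α * (1 - α ^ 2) * (x : ℂ) ^ (-5 : ℤ))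
      = w' x - 7 * c₇ * (x : ℂ) ^ (-8 : ℤ) := by
    simp only [hw', hc₄]; ring
  rw [hrw]
  refine (norm_sub_le _ _).trans ?_
  have h8 : ‖7 * c₇ * (x : ℂ) ^ (-8 : ℤ)‖ = 7 * ‖c₇‖ * x ^ (-8 : ℤ) := by
    rw [norm_mul, norm_mul, norm_zpow, Complex.norm_real, Real.norm_of_nonneg hx0.le]
    norm_num
  rw [h8]
  linarith

/-- Under the asymptotic expansion (A+), `u'(x) → 0` as `x → +∞`, and
`v'(x) = -2α x⁻² - 48 α (1-α²) x⁻⁵ + O(x⁻⁸)` as `x → +∞`,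
where `v(x) = (2/3^{1/3}) u(x/3^{1/3})`. -/
theorem stmt_5 (α : ℂ) (hα : α.re = 0) (u : ℝ → ℂ)
    (hu : ContDiff ℝ 2 u)
    (hP : ∀ x : ℝ, deriv (deriv u) x = (x : ℂ) * u x + 2 * (u x) ^ 3 - α)
    (him : ∀ x : ℝ, (u x).re = 0)
    (hAp : ∃ x₀ : ℝ, 0 < x₀ ∧ ∃ K : ℝ, 0 < K ∧ ∀ x : ℝ, x₀ ≤ x →
      ‖u x - α / x - 2 * α * (1 - α ^ 2) * (x : ℂ) ^ (-4 : ℤ)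
        - 4 * α * (1 - α ^ 2) * (10 - 3 * α ^ 2) * (x : ℂ) ^ (-7 : ℤ)‖
        ≤ K * x ^ (-10 : ℤ))
    (v : ℝ → ℂ)
    (hv : ∀ x : ℝ, v x = ((2 / cbrt3 : ℝ) : ℂ) * u (x / cbrt3)) :
    Filter.Tendsto (deriv u) Filter.atTop (nhds 0) ∧
    ∃ x₁ : ℝ, 0 < x₁ ∧ ∃ K' : ℝ, 0 < K' ∧ ∀ x : ℝ, x₁ ≤ x →
      ‖deriv v x - (-2 * α * (x : ℂ) ^ (-2 : ℤ)
        - 48 * α * (1 - α ^ 2) * (x : ℂ) ^ (-5 : ℤ))‖ ≤ K' * x ^ (-8 : ℤ) := by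
  obtain ⟨X, hX, C, hC, hexp⟩ := deriv_expansion α u hu hP hAp
  refine ⟨?_, ?_⟩
  · have hlim : Filter.Tendsto (fun x : ℝ => (‖α‖ + ‖8 * α * (1 - α ^ 2)‖ + C) * x⁻¹)
        Filter.atTop (nhds 0) := by
      simpa only [mul_zero] using
        tendsto_inv_atTop_zero.const_mul (‖α‖ + ‖8 * α * (1 - α ^ 2)‖ + C)
    refine squeeze_zero_norm' ?_ hlim
    filter_upwards [Filter.eventually_ge_atTop X] with x hx
    have hx1 : 1 ≤ x := hX.trans hx
    have hx0 : 0 < x := by linarith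
    have hz : ∀ n : ℤ, n ≤ -1 → x ^ n ≤ x⁻¹ := by
      intro n hn
      rw [← zpow_neg_one]
      exact zpow_le_zpow_right₀ hx1 hn
    have hn : ∀ n : ℤ, ‖(x : ℂ) ^ n‖ = x ^ n := by
      intro n
      rw [norm_zpow, Complex.norm_real, Real.norm_of_nonneg hx0.le]
    have h1 := hexp x hx
    have h2 : ‖-α * (x : ℂ) ^ (-2 : ℤ) - 8 * α * (1 - α ^ 2) * (x : ℂ) ^ (-5 : ℤ)‖
        ≤ ‖α‖ * x⁻¹ + ‖8 * α * (1 - α ^ 2)‖ * x⁻¹ := by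
      refine (norm_sub_le _ _).trans (add_le_add ?_ ?_)
      · rw [norm_mul, norm_neg, hn]
        exact mul_le_mul_of_nonneg_left (hz _ (by norm_num)) (norm_nonneg _)
      · rw [norm_mul, hn]
        exact mul_le_mul_of_nonneg_left (hz _ (by norm_num)) (norm_nonneg _)
    have h3 : C * x ^ (-8 : ℤ) ≤ C * x⁻¹ := mul_le_mul_of_nonneg_left (hz _ (by norm_num)) hC.le
    have h4 := norm_le_norm_add_norm_sub' (deriv u x)
      (-α * (x : ℂ) ^ (-2 : ℤ) - 8 * α * (1 - α ^ 2) * (x : ℂ) ^ (-5 : ℤ))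
    linarith
  · have hc0 : 0 < cbrt3 := by unfold cbrt3; positivity
    have hc3 : cbrt3 ^ 3 = 3 := by
      unfold cbrt3
      rw [← Real.rpow_natCast, ← Real.rpow_mul (by norm_num)]
      norm_num
    have hcc : (cbrt3 : ℂ) ≠ 0 := by exact_mod_cast hc0.ne'
    have hcc3 : (cbrt3 : ℂ) ^ 3 = 3 := by exact_mod_cast hc3
    refine ⟨X * cbrt3, by positivity, 2 / cbrt3 ^ 2 * C * cbrt3 ^ 8, by positivity,
      fun x hx => ?_⟩
    have hxX : X ≤ x / cbrt3 := by rwa [le_div_iff₀ hc0]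
    have hx0 : 0 < x := lt_of_lt_of_le (by positivity) hx
    have hxc : (x : ℂ) ≠ 0 := by exact_mod_cast hx0.ne'
    have hu1 : Differentiable ℝ u := hu.differentiable (by norm_num)
    have hdv : deriv v x = ((2 / cbrt3 ^ 2 : ℝ) : ℂ) * deriv u (x / cbrt3) := by
      have hfun : v = fun x : ℝ => ((2 / cbrt3 : ℝ) : ℂ) * u (x / cbrt3) := funext hv
      have h1 := ((hu1 (x / cbrt3)).hasDerivAt.scomp x
        ((hasDerivAt_id x).div_const cbrt3)).const_mul ((2 / cbrt3 : ℝ) : ℂ)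
      rw [hfun]
      refine (HasDerivAt.deriv h1).trans ?_
      rw [Complex.real_smul]
      push_cast
      field_simp
    have hrw : deriv v x - (-2 * α * (x : ℂ) ^ (-2 : ℤ)
          - 48 * α * (1 - α ^ 2) * (x : ℂ) ^ (-5 : ℤ))
        = ((2 / cbrt3 ^ 2 : ℝ) : ℂ) * (deriv u (x / cbrt3)
          - (-α * ((x / cbrt3 : ℝ) : ℂ) ^ (-2 : ℤ)
            - 8 * α * (1 - α ^ 2) * ((x / cbrt3 : ℝ) : ℂ) ^ (-5 : ℤ))) := by
      have e2 : ((2 / cbrt3 ^ 2 : ℝ) : ℂ) * ((x / cbrt3 : ℝ) : ℂ) ^ (-2 : ℤ)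
          = 2 * (x : ℂ) ^ (-2 : ℤ) := by
        push_cast
        rw [div_zpow, zpow_neg, zpow_neg]
        norm_cast
        push_cast
        field_simp
      have e5 : ((2 / cbrt3 ^ 2 : ℝ) : ℂ) * ((x / cbrt3 : ℝ) : ℂ) ^ (-5 : ℤ)
          = 6 * (x : ℂ) ^ (-5 : ℤ) := by
        have : ((2 / cbrt3 ^ 2 : ℝ) : ℂ) * ((x / cbrt3 : ℝ) : ℂ) ^ (-5 : ℤ)
            = 2 * (cbrt3 : ℂ) ^ 3 * (x : ℂ) ^ (-5 : ℤ) := by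
          push_cast
          rw [div_zpow, zpow_neg, zpow_neg]
          norm_cast
          push_cast
          field_simp
        rw [this, hcc3]; norm_num
      rw [hdv]
      linear_combination (-α) * e2 - 8 * α * (1 - α ^ 2) * e5
    rw [hrw, norm_mul, Complex.norm_real, Real.norm_of_nonneg (by positivity)]
    calc 2 / cbrt3 ^ 2 * ‖_‖ ≤ 2 / cbrt3 ^ 2 * (C * (x / cbrt3) ^ (-8 : ℤ)) := by
          gcongr; exact hexp _ hxX
      _ = 2 / cbrt3 ^ 2 * C * cbrt3 ^ 8 * x ^ (-8 : ℤ) := by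
          rw [div_zpow, zpow_neg, zpow_neg]
          norm_cast
          field_simp
end

section
/- Let μ ∈ ℝ, set α := −iμ/2, and let u : ℝ → ℂ be twice continuously differentiable, satisfy the PII equation u''(x) = x·u(x) + 2·u(x)³ − α on ℝ, take purely imaginary values on ℝ, and satisfy the asymptotic expansion (A+): there exist x₀, K > 0 such that |u(x) − α/x − 2α(1−α²)·x^{−4} − 4α(1−α²)(10−3α²)·x^{−7}| ≤ K·x^{−10} for all x ≥ x₀. Define v(x) := (2/3^{1/3})·u(x/3^{1/3}). Then v'(x) − v(x)²/2 = a₂·x^{−2} + a₅·x^{−5} + O(x^{−8}) as x → +∞, where a₂ := iμ + μ²/2 and a₅ := (4+μ²)·(6iμ + 3μ²/2). -/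
/-!
Write `s = 1/x`, let `w = α s + b s⁴ + c s⁷` be the truncated expansion, and `r = u - w = O(s¹⁰)`.
The coefficients `b`, `c` are exactly those for which `w` solves the Painlevé equation up to
`O(s⁹)`, so the equation itself gives `r'' = O(s⁹)` (`remainder_second_deriv`). A bound on `r` and
on `r''` over `[x, x + 1]` bounds `r'(x)` (`norm_deriv_le_of_norm_second_deriv_le`), hence
`r' = O(s⁸)`, and the expansion of `u` may be differentiated (`expansion_of_deriv`). Substituting
the expansions of `u` and `u'` into `v' - v²/2 = (2 / 3^{2/3}) (u' - u²)` gives the claim.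

An error term `O(sⁿ)` is written as `sⁿ ρ` with `ρ` bounded; an error polynomial in `s ≤ 1` and in
such `ρ` is then bounded by compactness (`exists_bound_on_balls`).
-/

/-- A Landau-type inequality: on an interval of unit length, bounds on a function and on its second
derivative bound the first derivative at the left endpoint. -/
theorem norm_deriv_le_of_norm_second_deriv_le (f f' f'' : ℝ → ℂ) (x A B : ℝ)
    (h1 : ∀ t ∈ Set.Icc x (x + 1), HasDerivAt f (f' t) t)
    (h2 : ∀ t ∈ Set.Icc x (x + 1), HasDerivAt f' (f'' t) t)
    (hA : ∀ t ∈ Set.Icc x (x + 1), ‖f t‖ ≤ A)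
    (hB : ∀ t ∈ Set.Icc x (x + 1), ‖f'' t‖ ≤ B) :
    ‖f' x‖ ≤ 2 * A + B := by
  have hx : x ∈ Set.Icc x (x + 1) := ⟨le_rfl, by linarith⟩
  have hx1 : x + 1 ∈ Set.Icc x (x + 1) := ⟨by linarith, le_rfl⟩
  have hB0 : 0 ≤ B := (norm_nonneg _).trans (hB x hx)
  have e1 : ∀ t ∈ Set.Icc x (x + 1), ‖f' t - f' x‖ ≤ B := by
    intro t ht
    have h := (convex_Icc x (x + 1)).norm_image_sub_le_of_norm_hasDerivWithin_le
      (fun y hy => (h2 y hy).hasDerivWithinAt) hB hx ht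
    refine h.trans ?_
    have : ‖t - x‖ ≤ 1 := by
      rw [Real.norm_eq_abs, abs_le]
      constructor <;> linarith [ht.1, ht.2]
    nlinarith
  have e2 : ‖(f (x + 1) - ((x + 1 : ℝ) : ℂ) * f' x) - (f x - (x : ℂ) * f' x)‖ ≤ B := by
    have h := (convex_Icc x (x + 1)).norm_image_sub_le_of_norm_hasDerivWithin_le
      (f := fun t : ℝ => f t - (t : ℂ) * f' x) (f' := fun t => f' t - f' x) (C := B)
      (fun y hy => by
        have := (h1 y hy).sub ((Complex.ofRealCLM.hasDerivAt (x := y)).mul_const (f' x))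
        exact (this.congr_deriv (by simp)).hasDerivWithinAt) e1 hx hx1
    simpa using h
  have e3 : f' x = f (x + 1) - f x
      - ((f (x + 1) - ((x + 1 : ℝ) : ℂ) * f' x) - (f x - (x : ℂ) * f' x)) := by
    push_cast; ring
  rw [e3]
  have := norm_sub_le (f (x + 1) - f x)
    ((f (x + 1) - ((x + 1 : ℝ) : ℂ) * f' x) - (f x - (x : ℂ) * f' x))
  have := norm_sub_le (f (x + 1)) (f x)
  linarith [hA x hx, hA _ hx1]

theorem exists_bound_on_balls (F : ℂ × ℂ × ℂ → ℂ) (hF : Continuous F) (K L : ℝ) :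
    ∃ M : ℝ, 0 < M ∧ ∀ s ρ σ : ℂ, ‖s‖ ≤ 1 → ‖ρ‖ ≤ K → ‖σ‖ ≤ L → ‖F (s, ρ, σ)‖ ≤ M := by
  have hc : IsCompact (Metric.closedBall (0 : ℂ) 1 ×ˢ
      (Metric.closedBall (0 : ℂ) K ×ˢ Metric.closedBall (0 : ℂ) L)) :=
    (isCompact_closedBall _ _).prod ((isCompact_closedBall _ _).prod (isCompact_closedBall _ _))
  obtain ⟨M, hM⟩ := hc.exists_bound_of_continuousOn hF.continuousOn
  refine ⟨max M 1, by positivity, fun s ρ σ hs hρ hσ => ?_⟩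
  exact (hM (s, ρ, σ) (by simp [hs, hρ, hσ])).trans (le_max_left _ _)

/-- The exact form of `r'' = O(s⁹)`: with `u = α s + b s⁴ + c s⁷ + ρ s¹⁰`, the right-hand side of the
Painlevé equation minus the second derivative of `α s + b s⁴ + c s⁷` is divisible by `s⁹`. -/
theorem remainder_second_deriv (α b c x s ρ : ℂ) (hb : b = 2 * α * (1 - α ^ 2))
    (hc : c = b * (20 - 6 * α ^ 2)) (hs : x * s = 1) :
    x * (α * s + b * s ^ 4 + c * s ^ 7 + s ^ 10 * ρ)
      + 2 * (α * s + b * s ^ 4 + c * s ^ 7 + s ^ 10 * ρ) ^ 3 - α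
      - (2 * α * s ^ 3 + 20 * b * s ^ 6 + 56 * c * s ^ 9)
    = s ^ 9 * (ρ + 6 * α ^ 2 * (c + ρ * s ^ 3) + 6 * α * (b + s ^ 3 * (c + ρ * s ^ 3)) ^ 2
        + 2 * s ^ 3 * (b + s ^ 3 * (c + ρ * s ^ 3)) ^ 3 - 56 * c) := by
  have h : x * (α * s + b * s ^ 4 + c * s ^ 7 + s ^ 10 * ρ)
      = α + b * s ^ 3 + c * s ^ 6 + s ^ 9 * ρ := by
    linear_combination (α + b * s ^ 3 + c * s ^ 6 + s ^ 9 * ρ) * hs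
  rw [h]
  linear_combination s ^ 3 * hb + s ^ 6 * hc

theorem hasDerivAt_inv_pow (x : ℝ) (hx : x ≠ 0) (n : ℕ) :
    HasDerivAt (fun t : ℝ => ((t : ℂ)⁻¹) ^ n) (-(n : ℂ) * ((x : ℂ)⁻¹) ^ (n + 1)) x := by
  have hx' : (x : ℂ) ≠ 0 := by exact_mod_cast hx
  have h := (((hasDerivAt_id (x : ℂ)).inv hx').pow n).comp_ofReal
  refine h.congr_deriv ?_
  simp only [Pi.inv_apply, id_eq]
  rcases n with _ | n
  · simp
  · simp [pow_succ]
    field_simp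
    ring

/-- The expansion of `u` may be differentiated once, at the cost of two orders in the error. -/
theorem expansion_of_deriv (α b c : ℂ) (hb : b = 2 * α * (1 - α ^ 2))
    (hc : c = b * (20 - 6 * α ^ 2)) (u : ℝ → ℂ) (hu : ContDiff ℝ 2 u)
    (hP : ∀ x : ℝ, deriv (deriv u) x = (x : ℂ) * u x + 2 * (u x) ^ 3 - α)
    (x₀ K : ℝ) (hx₀ : 1 ≤ x₀)
    (hA : ∀ x : ℝ, x₀ ≤ x → ∃ ρ : ℂ, ‖ρ‖ ≤ K ∧
      u x = α * (x : ℂ)⁻¹ + b * (x : ℂ)⁻¹ ^ 4 + c * (x : ℂ)⁻¹ ^ 7 + (x : ℂ)⁻¹ ^ 10 * ρ) :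
    ∃ L : ℝ, ∀ x : ℝ, x₀ ≤ x → ∃ σ : ℂ, ‖σ‖ ≤ L ∧
      deriv u x = -α * (x : ℂ)⁻¹ ^ 2 - 4 * b * (x : ℂ)⁻¹ ^ 5 + (x : ℂ)⁻¹ ^ 8 * σ := by
  obtain ⟨M, hM0, hM⟩ := exists_bound_on_balls (fun p => p.2.1 + 6 * α ^ 2 * (c + p.2.1 * p.1 ^ 3)
    + 6 * α * (b + p.1 ^ 3 * (c + p.2.1 * p.1 ^ 3)) ^ 2
    + 2 * p.1 ^ 3 * (b + p.1 ^ 3 * (c + p.2.1 * p.1 ^ 3)) ^ 3 - 56 * c) (by fun_prop) K 0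
  have hK : 0 ≤ K := by
    obtain ⟨ρ, h, -⟩ := hA x₀ le_rfl
    exact (norm_nonneg _).trans h
  have hd1 : Differentiable ℝ u := hu.differentiable (by norm_num)
  have hd2 : Differentiable ℝ (deriv u) := by
    have : ContDiff ℝ 1 (deriv u) := ((contDiff_succ_iff_deriv (n := 1)).1
      (by simpa [one_add_one_eq_two] using hu)).2.2
    exact this.differentiable (by norm_num)
  refine ⟨2 * K + M + 7 * ‖c‖, fun x hx => ?_⟩
  have hx1 : 1 ≤ x := hx₀.trans hx
  have hxC : (x : ℂ) ≠ 0 := by exact_mod_cast (by linarith : x ≠ 0)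
  have hinv : ∀ t ∈ Set.Icc x (x + 1), ∀ n, 8 ≤ n → ‖(t : ℂ)⁻¹ ^ n‖ ≤ x⁻¹ ^ 8 := by
    intro t ht n hn
    have ht1 : 1 ≤ t := hx1.trans ht.1
    rw [norm_pow, norm_inv, Complex.norm_of_nonneg (by linarith)]
    calc t⁻¹ ^ n ≤ t⁻¹ ^ 8 :=
          pow_le_pow_of_le_one (by positivity) (inv_le_one_of_one_le₀ ht1) hn
      _ ≤ x⁻¹ ^ 8 := by
          have := ht.1
          gcongr
  have key := norm_deriv_le_of_norm_second_deriv_le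
    (fun t => u t - (α * (t : ℂ)⁻¹ ^ 1 + b * (t : ℂ)⁻¹ ^ 4 + c * (t : ℂ)⁻¹ ^ 7))
    (fun t => deriv u t
      - (-α * (t : ℂ)⁻¹ ^ 2 + (-4 * b) * (t : ℂ)⁻¹ ^ 5 + (-7 * c) * (t : ℂ)⁻¹ ^ 8))
    (fun t => deriv (deriv u) t
      - (2 * α * (t : ℂ)⁻¹ ^ 3 + 20 * b * (t : ℂ)⁻¹ ^ 6 + 56 * c * (t : ℂ)⁻¹ ^ 9))
    x (K * x⁻¹ ^ 8) (M * x⁻¹ ^ 8) ?_ ?_ ?_ ?_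
  · refine ⟨x ^ 8 * (deriv u x
      - (-α * (x : ℂ)⁻¹ ^ 2 + (-4 * b) * (x : ℂ)⁻¹ ^ 5 + (-7 * c) * (x : ℂ)⁻¹ ^ 8))
      - 7 * c, ?_, ?_⟩
    · refine (norm_sub_le _ _).trans ?_
      have h7 : ‖7 * c‖ = 7 * ‖c‖ := by simp
      rw [h7, norm_mul, norm_pow, Complex.norm_of_nonneg (by linarith)]
      have : x ^ 8 * (2 * (K * x⁻¹ ^ 8) + M * x⁻¹ ^ 8) = 2 * K + M := by
        field_simp
      have := mul_le_mul_of_nonneg_left key (by positivity : 0 ≤ x ^ 8)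
      linarith
    · field_simp
      ring
  · intro t ht
    have ht0 : t ≠ 0 := by linarith [ht.1]
    refine HasDerivAt.congr_deriv ((hd1 t).hasDerivAt.sub ((((hasDerivAt_inv_pow t ht0 1).const_mul α).add
      ((hasDerivAt_inv_pow t ht0 4).const_mul b)).add
      ((hasDerivAt_inv_pow t ht0 7).const_mul c))) ?_
    push_cast; ring
  · intro t ht
    have ht0 : t ≠ 0 := by linarith [ht.1]
    refine HasDerivAt.congr_deriv ((hd2 t).hasDerivAt.sub ((((hasDerivAt_inv_pow t ht0 2).const_mul (-α)).add
      ((hasDerivAt_inv_pow t ht0 5).const_mul (-4 * b))).add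
      ((hasDerivAt_inv_pow t ht0 8).const_mul (-7 * c)))) ?_
    push_cast; ring
  · intro t ht
    obtain ⟨ρ, hρ, h⟩ := hA t (hx.trans ht.1)
    have : u t - (α * (t : ℂ)⁻¹ ^ 1 + b * (t : ℂ)⁻¹ ^ 4 + c * (t : ℂ)⁻¹ ^ 7)
        = ρ * (t : ℂ)⁻¹ ^ 10 := by rw [h]; ring
    simp only [this]
    rw [norm_mul]
    exact mul_le_mul hρ (hinv t ht 10 (by norm_num)) (norm_nonneg _) hK
  · intro t ht
    obtain ⟨ρ, hρ, h⟩ := hA t (hx.trans ht.1)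
    have ht1 : 1 ≤ t := hx1.trans ht.1
    have htC : (t : ℂ) ≠ 0 := by exact_mod_cast (by linarith : t ≠ 0)
    simp only [hP t, h]
    rw [remainder_second_deriv α b c t _ ρ hb hc (mul_inv_cancel₀ htC), norm_mul, mul_comm]
    have hs1 : ‖(t : ℂ)⁻¹‖ ≤ 1 := by
      rw [norm_inv, Complex.norm_of_nonneg (by linarith)]
      exact inv_le_one_of_one_le₀ ht1
    exact mul_le_mul (hM _ ρ 0 hs1 hρ (by simp)) (hinv t ht 9 (by norm_num))
      (norm_nonneg _) hM0.le


/-- Under the asymptotic expansion (A+) with `α = -iμ/2`,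
`v'(x) - v(x)²/2 = a₂ x⁻² + a₅ x⁻⁵ + O(x⁻⁸)` as `x → +∞`,
where `a₂ = iμ + μ²/2` and `a₅ = (4+μ²)(6iμ + 3μ²/2)`. -/
theorem stmt_6 (μ : ℝ) (α : ℂ) (hα : α = -Complex.I * μ / 2)
    (u : ℝ → ℂ) (hu : ContDiff ℝ 2 u)
    (hP : ∀ x : ℝ, deriv (deriv u) x = (x : ℂ) * u x + 2 * (u x) ^ 3 - α)
    (him : ∀ x : ℝ, (u x).re = 0)
    (hAp : ∃ x₀ : ℝ, 0 < x₀ ∧ ∃ K : ℝ, 0 < K ∧ ∀ x : ℝ, x₀ ≤ x →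
      ‖u x - α / x - 2 * α * (1 - α ^ 2) * (x : ℂ) ^ (-4 : ℤ)
        - 4 * α * (1 - α ^ 2) * (10 - 3 * α ^ 2) * (x : ℂ) ^ (-7 : ℤ)‖
        ≤ K * x ^ (-10 : ℤ))
    (v : ℝ → ℂ)
    (hv : ∀ x : ℝ, v x = ((2 / cbrt3 : ℝ) : ℂ) * u (x / cbrt3)) :
    ∃ x₁ : ℝ, 0 < x₁ ∧ ∃ K' : ℝ, 0 < K' ∧ ∀ x : ℝ, x₁ ≤ x →
      ‖(deriv v x - (v x) ^ 2 / 2)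
        - ((Complex.I * μ + (μ:ℂ) ^ 2 / 2) * (x : ℂ) ^ (-2 : ℤ)
          + (4 + (μ:ℂ) ^ 2) * (6 * Complex.I * μ + 3 * (μ:ℂ) ^ 2 / 2) * (x : ℂ) ^ (-5 : ℤ))‖
        ≤ K' * x ^ (-8 : ℤ) := by
  obtain ⟨x₀, hx₀, K, hK, hA⟩ := hAp
  set b : ℂ := 2 * α * (1 - α ^ 2) with hb
  set c : ℂ := b * (20 - 6 * α ^ 2) with hc
  have hA' : ∀ x : ℝ, max x₀ 1 ≤ x → ∃ ρ : ℂ, ‖ρ‖ ≤ K ∧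
      u x = α * (x : ℂ)⁻¹ + b * (x : ℂ)⁻¹ ^ 4 + c * (x : ℂ)⁻¹ ^ 7 + (x : ℂ)⁻¹ ^ 10 * ρ := by
    intro x hx
    have hx1 : 1 ≤ x := (le_max_right _ _).trans hx
    have hxC : (x : ℂ) ≠ 0 := by exact_mod_cast (by linarith : x ≠ 0)
    have h := hA x ((le_max_left _ _).trans hx)
    have e : u x - α / x - b * (x : ℂ) ^ (-4 : ℤ)
        - 4 * α * (1 - α ^ 2) * (10 - 3 * α ^ 2) * (x : ℂ) ^ (-7 : ℤ)
        = u x - (α * (x : ℂ)⁻¹ + b * (x : ℂ)⁻¹ ^ 4 + c * (x : ℂ)⁻¹ ^ 7) := by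
      have h4 : (x : ℂ) ^ (-4 : ℤ) = (x : ℂ)⁻¹ ^ 4 := by rw [inv_pow]; rfl
      have h7 : (x : ℂ) ^ (-7 : ℤ) = (x : ℂ)⁻¹ ^ 7 := by rw [inv_pow]; rfl
      rw [h4, h7, hc, hb]; ring
    rw [e] at h
    refine ⟨x ^ 10 * (u x - (α * (x : ℂ)⁻¹ + b * (x : ℂ)⁻¹ ^ 4 + c * (x : ℂ)⁻¹ ^ 7)), ?_, ?_⟩
    · rw [norm_mul, norm_pow, Complex.norm_of_nonneg (by linarith)]
      have h10 : x ^ (-10 : ℤ) = (x ^ 10)⁻¹ := rfl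
      rw [h10] at h
      have h' := mul_le_mul_of_nonneg_left h (by positivity : 0 ≤ x ^ 10)
      have : x ^ 10 * (K * (x ^ 10)⁻¹) = K := by field_simp
      linarith
    · field_simp
      ring
  obtain ⟨L, hL⟩ := expansion_of_deriv α b c hb hc u hu hP (max x₀ 1) K (le_max_right _ _) hA'
  obtain ⟨M, hM0, hM⟩ := exists_bound_on_balls (fun p => 2 * (p.2.2
    - (2 * α * (c + p.2.1 * p.1 ^ 3) + (b + p.1 ^ 3 * (c + p.2.1 * p.1 ^ 3)) ^ 2)))
    (by fun_prop) K L
  have hk : 0 < cbrt3 := by unfold cbrt3; positivity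
  have hk3 : cbrt3 ^ 3 = 3 := by
    unfold cbrt3
    rw [← Real.rpow_natCast, ← Real.rpow_mul (by norm_num)]
    norm_num
  have hkC : (cbrt3 : ℂ) ≠ 0 := by exact_mod_cast hk.ne'
  have hk3C : (cbrt3 : ℂ) ^ 3 = 3 := by exact_mod_cast hk3
  refine ⟨cbrt3 * max x₀ 1, by positivity, 9 * M, by positivity, fun x hx => ?_⟩
  have hy : max x₀ 1 ≤ x / cbrt3 := by rwa [le_div_iff₀ hk, mul_comm]
  have hy1 : 1 ≤ x / cbrt3 := (le_max_right _ _).trans hy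
  have hx0 : 0 < x := by
    have : cbrt3 ≤ x := by rwa [le_div_iff₀ hk, one_mul] at hy1
    linarith
  have hxC : (x : ℂ) ≠ 0 := by exact_mod_cast hx0.ne'
  obtain ⟨ρ, hρ, hu0⟩ := hA' _ hy
  obtain ⟨σ, hσ, hu1⟩ := hL _ hy
  have hdv : deriv v x = ((2 / cbrt3 : ℝ) : ℂ) * ((1 / cbrt3 : ℝ) * deriv u (x / cbrt3)) := by
    have hd : HasDerivAt u (deriv u (x / cbrt3)) (x / cbrt3) :=
      ((hu.differentiable (by norm_num)) _).hasDerivAt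
    have h := (hd.scomp x ((hasDerivAt_id x).div_const cbrt3)).const_mul ((2 / cbrt3 : ℝ) : ℂ)
    have hv' : v = fun y => ((2 / cbrt3 : ℝ) : ℂ) * (u ∘ fun x => id x / cbrt3) y :=
      funext hv
    rw [hv', h.deriv, Complex.real_smul]
  set s : ℂ := ((x / cbrt3 : ℝ) : ℂ)⁻¹ with hs
  have hxs : (x : ℂ)⁻¹ = s / cbrt3 := by
    rw [hs]; push_cast; field_simp
  have hs1 : ‖s‖ ≤ 1 := by
    rw [hs, norm_inv, Complex.norm_of_nonneg (by linarith)]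
    exact inv_le_one_of_one_le₀ hy1
  have hns : ‖s‖ ^ 8 / cbrt3 ^ 2 = 9 * x ^ (-8 : ℤ) := by
    have h8 : x ^ (-8 : ℤ) = (x ^ 8)⁻¹ := rfl
    rw [hs, norm_inv, Complex.norm_of_nonneg (by linarith), h8]
    field_simp
    linear_combination (cbrt3 ^ 3 + 3) * hk3
  have h2 : (x : ℂ) ^ (-2 : ℤ) = s ^ 2 / (cbrt3 : ℂ) ^ 2 := by
    rw [← div_pow, ← hxs, inv_pow]; rfl
  -- `3^{5/3} = 3 · 3^{2/3}`, so every term carries the same factor `3^{-2/3}`.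
  have h5 : (x : ℂ) ^ (-5 : ℤ) = s ^ 5 / (3 * (cbrt3 : ℂ) ^ 2) := by
    rw [← hk3C, ← pow_add, ← div_pow, ← hxs, inv_pow]; rfl
  have main : (deriv v x - (v x) ^ 2 / 2)
        - ((Complex.I * μ + (μ:ℂ) ^ 2 / 2) * (x : ℂ) ^ (-2 : ℤ)
          + (4 + (μ:ℂ) ^ 2) * (6 * Complex.I * μ + 3 * (μ:ℂ) ^ 2 / 2) * (x : ℂ) ^ (-5 : ℤ))
      = s ^ 8 / (cbrt3 : ℂ) ^ 2 * (2 * (σ - (2 * α * (c + ρ * s ^ 3)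
          + (b + s ^ 3 * (c + ρ * s ^ 3)) ^ 2))) := by
    have ha2 : Complex.I * μ + (μ:ℂ) ^ 2 / 2 = -2 * α - 2 * α ^ 2 := by
      rw [hα]; linear_combination (μ : ℂ) ^ 2 / 2 * Complex.I_sq
    have ha5 : (4 + (μ:ℂ) ^ 2) * (6 * Complex.I * μ + 3 * (μ:ℂ) ^ 2 / 2)
        = 3 * (-8 * b - 4 * α * b) := by
      have hm : (μ : ℂ) = 2 * Complex.I * α := by
        rw [hα]; linear_combination (μ : ℂ) * Complex.I_sq
      have hm2 : (μ : ℂ) ^ 2 = -4 * α ^ 2 := by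
        rw [hm]; linear_combination 4 * α ^ 2 * Complex.I_sq
      have hIm : Complex.I * μ = -2 * α := by
        rw [hm]; linear_combination 2 * α * Complex.I_sq
      rw [mul_assoc 6, hIm, hm2, hb]; ring
    rw [ha2, ha5, h2, h5, hdv, hv, hu0, hu1]
    push_cast
    field_simp
    ring
  rw [main, norm_mul, norm_div, norm_pow, norm_pow, Complex.norm_of_nonneg hk.le, hns]
  have := mul_le_mul_of_nonneg_left (hM s ρ σ hs1 hρ hσ)
    (by positivity : 0 ≤ 9 * x ^ (-8 : ℤ))
  linarith
end

section
/- Let μ ∈ ℝ, set α := −iμ/2, and let u : ℝ → ℂ be a smooth solution of the PII equation u''(x) = x·u(x) + 2·u(x)³ − α on ℝ, taking purely imaginary values on ℝ and satisfying the asymptotic expansion (A+): there exist x₀, K > 0 such that |u(x) − α/x − 2α(1−α²)·x^{−4} − 4α(1−α²)(10−3α²)·x^{−7}| ≤ K·x^{−10} for all x ≥ x₀. Define w(x) := ∫₀ˣ exp( (2/3^{1/3}) ∫₀^y u(z/3^{1/3}) dz ) dy − C with C := (2·3^{1/3}/(1−iμ))·(u'(0) − u(0)²), and g(x) := e^{iμ·ln|x|}·w(x)/x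 for x ≠ 0. Then there exists g₊ ∈ ℂ with |g₊| = (1+μ²)^{−1/2} such that lim_{x→+∞} g(x) = g₊ and w'(x)·e^{iμ·ln x} = (1−iμ)·g₊ + O(x^{−3}) as x → +∞. -/
open Filter Topology

/-- A function whose derivative is `O(x^{-(n+2)})` on `[a, ∞)` converges at infinity, with
error `O(x^{-(n+1)})`. -/
lemma exists_limit_of_norm_deriv_le (n : ℕ) {a K : ℝ} (ha : 0 < a) (hK : 0 ≤ K) {f f' : ℝ → ℂ}
    (hf : ∀ x, a ≤ x → HasDerivAt f (f' x) x)
    (hb : ∀ x, a ≤ x → ‖f' x‖ ≤ K * (x ^ (n + 2))⁻¹) :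
    ∃ L : ℂ, Tendsto f atTop (𝓝 L) ∧ ∀ x, a ≤ x → ‖f x - L‖ ≤ K * (x ^ (n + 1))⁻¹ := by
  have key : ∀ x, a ≤ x → ∀ y, x ≤ y → ‖f y - f x‖ ≤ K * (x ^ (n + 1))⁻¹ := by
    intro x hx y hxy
    have hx0 : 0 < x := ha.trans_le hx
    -- Comparison function: the primitive of `K z^{-(n+2)}` vanishing at `x`.
    have hder : ∀ z, x ≤ z → HasDerivAt
        (fun z : ℝ => K / (n + 1) * ((x ^ (n + 1))⁻¹ - (z ^ (n + 1))⁻¹)) (K * (z ^ (n + 2))⁻¹) z := by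
      intro z hz
      have hz0 : z ≠ 0 := (hx0.trans_le hz).ne'
      have h1 := (((hasDerivAt_pow (n + 1) z).inv (pow_ne_zero _ hz0)).const_sub
        ((x ^ (n + 1))⁻¹)).const_mul (K / (n + 1))
      refine h1.congr_deriv ?_
      have : (n : ℝ) + 1 ≠ 0 := by positivity
      simp only [Nat.add_sub_cancel]
      push_cast
      field_simp
      ring
    have h2 := image_norm_le_of_norm_deriv_right_le_deriv_boundary'
      (f := fun z => f z - f x) (f' := f') (a := x) (b := y)
      (fun z hz => ((hf z (hx.trans hz.1)).sub_const _).continuousAt.continuousWithinAt)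
      (fun z hz => ((hf z (hx.trans hz.1)).sub_const _).hasDerivWithinAt)
      (B := fun z : ℝ => K / (n + 1) * ((x ^ (n + 1))⁻¹ - (z ^ (n + 1))⁻¹))
      (B' := fun z => K * (z ^ (n + 2))⁻¹) (by simp)
      (fun z hz => (hder z hz.1).continuousAt.continuousWithinAt)
      (fun z hz => (hder z hz.1).hasDerivWithinAt)
      (fun z hz => hb z (hx.trans hz.1))
    refine (h2 ⟨hxy, le_rfl⟩).trans ?_
    have hy0 : 0 < y := hx0.trans_le hxy
    have h3 : K / (n + 1) ≤ K := div_le_self hK (by simp)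
    have h4 : 0 ≤ (y ^ (n + 1))⁻¹ := by positivity
    have h5 : 0 ≤ (x ^ (n + 1))⁻¹ := by positivity
    have h6 : 0 ≤ K / (n + 1) := by positivity
    calc K / (n + 1) * ((x ^ (n + 1))⁻¹ - (y ^ (n + 1))⁻¹)
        ≤ K / (n + 1) * (x ^ (n + 1))⁻¹ := by gcongr; linarith
      _ ≤ K * (x ^ (n + 1))⁻¹ := by gcongr
  have htend : Tendsto (fun x : ℝ => K * (x ^ (n + 1))⁻¹) atTop (𝓝 0) := by
    have := ((tendsto_pow_atTop (α := ℝ) (n := n + 1) (by simp)).inv_tendsto_atTop).const_mul K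
    simpa using this
  have hc : CauchySeq f := by
    rw [Metric.cauchySeq_iff']
    intro ε hε
    obtain ⟨N, hN, hNa⟩ := ((htend.eventually (gt_mem_nhds hε)).and (eventually_ge_atTop a)).exists
    exact ⟨N, fun y hy => by rw [dist_eq_norm]; exact (key N hNa y hy).trans_lt hN⟩
  obtain ⟨L, hL⟩ := cauchySeq_tendsto_of_complete hc
  refine ⟨L, hL, fun x hx => ?_⟩
  rw [norm_sub_rev]
  exact le_of_tendsto (hL.sub_const (f x)).norm
    ((eventually_ge_atTop x).mono fun y hy => key x hx y hy)

/-- There exists `g₊` with `|g₊| = (1+μ²)^{-1/2}` such that `g(x) → g₊` as `x → +∞` and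
`w'(x) e^{iμ ln x} = (1-iμ) g₊ + O(x⁻³)` as `x → +∞`. -/
theorem stmt_7 (μ : ℝ) (α : ℂ) (hα : α = -Complex.I * μ / 2)
    (u : ℝ → ℂ) (hu : ContDiff ℝ (⊤ : ℕ∞) u)
    (hP : ∀ x : ℝ, deriv (deriv u) x = (x : ℂ) * u x + 2 * (u x) ^ 3 - α)
    (him : ∀ x : ℝ, (u x).re = 0)
    (hAp : ∃ x₀ : ℝ, 0 < x₀ ∧ ∃ K : ℝ, 0 < K ∧ ∀ x : ℝ, x₀ ≤ x →
      ‖u x - α / x - 2 * α * (1 - α ^ 2) * (x : ℂ) ^ (-4 : ℤ)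
        - 4 * α * (1 - α ^ 2) * (10 - 3 * α ^ 2) * (x : ℂ) ^ (-7 : ℤ)‖
        ≤ K * x ^ (-10 : ℤ))
    (Cc : ℂ)
    (hC : Cc = (2 * cbrt3 / (1 - Complex.I * μ)) * (deriv u 0 - (u 0) ^ 2))
    (w : ℝ → ℂ)
    (hw : ∀ x : ℝ, w x =
      (∫ y in (0:ℝ)..x, Complex.exp (((2 / cbrt3 : ℝ) : ℂ) *
        ∫ z in (0:ℝ)..y, u (z / cbrt3))) - Cc)
    (g : ℝ → ℂ)
    (hg : ∀ x : ℝ, x ≠ 0 →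
      g x = Complex.exp (Complex.I * μ * Real.log |x|) * w x / x) :
    ∃ gp : ℂ, ‖gp‖ = (1 + μ ^ 2) ^ (-(1:ℝ)/2) ∧
      Filter.Tendsto g Filter.atTop (nhds gp) ∧
      ∃ x₁ : ℝ, 0 < x₁ ∧ ∃ K' : ℝ, 0 < K' ∧ ∀ x : ℝ, x₁ ≤ x →
        ‖deriv w x * Complex.exp (Complex.I * μ * Real.log x)
          - (1 - Complex.I * μ) * gp‖ ≤ K' * x ^ (-3 : ℤ) := by
  obtain ⟨x₀, hx₀, K, hK, hA⟩ := hAp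
  have hc : 0 < cbrt3 := by unfold cbrt3; positivity
  have hcC : (cbrt3 : ℂ) ≠ 0 := by exact_mod_cast hc.ne'
  generalize cbrt3 = c at *
  have huc : Continuous fun z : ℝ => u (z / c) := hu.continuous.comp (continuous_id.div_const c)
  obtain ⟨φ, hφ⟩ : ∃ φ : ℝ → ℂ, φ = fun y : ℝ => ((2 / c : ℝ) : ℂ) * ∫ z in (0:ℝ)..y, u (z / c) :=
    ⟨_, rfl⟩
  have hφd : ∀ x, HasDerivAt φ (((2 / c : ℝ) : ℂ) * u (x / c)) x := by
    intro x
    rw [hφ]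
    exact (huc.integral_hasStrictDerivAt 0 x).hasDerivAt.const_mul _
  have hφre : ∀ x, (φ x).re = 0 := by
    intro x
    have h0 : (∫ z in (0:ℝ)..x, u (z / c)).re = 0 := by
      have := Complex.reCLM.intervalIntegral_comp_comm (huc.intervalIntegrable (μ := MeasureTheory.volume) 0 x)
      simp only [Complex.reCLM_apply, him] at this
      simpa using this.symm
    rw [hφ]
    simp only [Complex.re_ofReal_mul, h0, mul_zero]
  have hwd : ∀ x, HasDerivAt w (Complex.exp (φ x)) x := by
    intro x
    have hcont : Continuous fun y => Complex.exp (φ y) :=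
      Complex.continuous_exp.comp (continuous_iff_continuousAt.2 fun y => (hφd y).continuousAt)
    have h1 := ((hcont.integral_hasStrictDerivAt 0 x).hasDerivAt).sub_const Cc
    have h2 : w = fun x => (∫ y in (0:ℝ)..x, Complex.exp (φ y)) - Cc := by
      funext x; rw [hw x, hφ]
    rw [h2]; exact h1
  have hlog : ∀ x : ℝ, 0 < x → HasDerivAt (fun x : ℝ => Complex.I * μ * (Real.log x : ℂ))
      (Complex.I * μ * (x : ℂ)⁻¹) x := by
    intro x hx
    have := ((Real.hasDerivAt_log hx.ne').ofReal_comp).const_mul (Complex.I * (μ : ℂ))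
    simpa using this
  have hnlog : ∀ x : ℝ, ‖Complex.exp (Complex.I * μ * (Real.log x : ℂ))‖ = 1 := by
    intro x; rw [Complex.norm_exp]; simp
  have hnlog' : ∀ x : ℝ, ‖Complex.exp (-(Complex.I * μ * (Real.log x : ℂ)))‖ = 1 := by
    intro x; rw [Complex.norm_exp]; simp
  -- The leading behaviour `u(t) = α/t + O(t⁻⁴)`.
  obtain ⟨M, hM, hMu⟩ : ∃ M : ℝ, 0 ≤ M ∧ ∀ t, max x₀ 1 ≤ t → ‖u t - α / t‖ ≤ M * (t ^ 4)⁻¹ := by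
    refine ⟨K + ‖2 * α * (1 - α ^ 2)‖ + ‖4 * α * (1 - α ^ 2) * (10 - 3 * α ^ 2)‖,
      by positivity, fun t ht => ?_⟩
    have ht1 : 1 ≤ t := (le_max_right _ _).trans ht
    have ht0 : 0 < t := by linarith
    have h := hA t ((le_max_left _ _).trans ht)
    generalize 2 * α * (1 - α ^ 2) = A at *
    generalize 4 * α * (1 - α ^ 2) * (10 - 3 * α ^ 2) = B at *
    have e4 : ‖A * (t : ℂ) ^ (-4 : ℤ)‖ = ‖A‖ * (t ^ 4)⁻¹ := by
      rw [norm_mul, norm_zpow, Complex.norm_real, Real.norm_of_nonneg ht0.le]; rfl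
    have e7 : ‖B * (t : ℂ) ^ (-7 : ℤ)‖ ≤ ‖B‖ * (t ^ 4)⁻¹ := by
      rw [norm_mul, norm_zpow, Complex.norm_real, Real.norm_of_nonneg ht0.le]
      change ‖B‖ * (t ^ 7)⁻¹ ≤ _
      gcongr
      norm_num
    have e10 : K * t ^ (-10 : ℤ) ≤ K * (t ^ 4)⁻¹ := by
      change K * (t ^ 10)⁻¹ ≤ _
      gcongr
      norm_num
    calc ‖u t - α / t‖
        = ‖(u t - α / t - A * (t : ℂ) ^ (-4 : ℤ) - B * (t : ℂ) ^ (-7 : ℤ))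
            + A * (t : ℂ) ^ (-4 : ℤ) + B * (t : ℂ) ^ (-7 : ℤ)‖ := by congr 1; ring
      _ ≤ _ := norm_add₃_le
      _ ≤ (K + ‖A‖ + ‖B‖) * (t ^ 4)⁻¹ := by linarith
  obtain ⟨F, hF⟩ : ∃ F : ℝ → ℂ, F = fun x : ℝ =>
    Complex.exp (φ x) * Complex.exp (Complex.I * μ * (Real.log x : ℂ)) := ⟨_, rfl⟩
  have hFn : ∀ x, ‖F x‖ = 1 := by
    intro x
    rw [hF]
    simp only [norm_mul, hnlog, Complex.norm_exp (φ x), hφre, Real.exp_zero, mul_one]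
  have ha : 0 < c * max x₀ 1 := by positivity
  have hFd : ∀ x, c * max x₀ 1 ≤ x → HasDerivAt F
      (F x * (((2 / c : ℝ) : ℂ) * u (x / c) + Complex.I * μ * (x : ℂ)⁻¹)) x := by
    intro x hx
    rw [hF]
    refine ((hφd x).cexp.mul (hlog x (ha.trans_le hx)).cexp).congr_deriv ?_
    ring
  have hFb : ∀ x, c * max x₀ 1 ≤ x →
      ‖F x * (((2 / c : ℝ) : ℂ) * u (x / c) + Complex.I * μ * (x : ℂ)⁻¹)‖
        ≤ (2 / c * M * c ^ 4) * (x ^ (2 + 2))⁻¹ := by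
    intro x hx
    have hx0 : 0 < x := ha.trans_le hx
    have hxC : (x : ℂ) ≠ 0 := by exact_mod_cast hx0.ne'
    have ht : max x₀ 1 ≤ x / c := by rw [le_div_iff₀ hc]; linarith
    -- The `iμ/x` term cancels the leading term `α/t` at `t = x/c`, since `2α = -iμ`.
    have e : ((2 / c : ℝ) : ℂ) * u (x / c) + Complex.I * μ * (x : ℂ)⁻¹
        = ((2 / c : ℝ) : ℂ) * (u (x / c) - α / ((x / c : ℝ) : ℂ)) := by
      rw [hα]; push_cast; field_simp; ring
    rw [norm_mul, hFn, one_mul, e, norm_mul, Complex.norm_real,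
      Real.norm_of_nonneg (by positivity : 0 ≤ 2 / c)]
    calc 2 / c * ‖u (x / c) - α / ((x / c : ℝ) : ℂ)‖
        ≤ 2 / c * (M * ((x / c) ^ 4)⁻¹) := by gcongr; exact hMu _ ht
      _ = _ := by field_simp
  obtain ⟨E, hE, hEb⟩ := exists_limit_of_norm_deriv_le 2 ha (by positivity) hFd hFb
  have hEn : ‖E‖ = 1 := by
    have h1 := hE.norm
    simp only [hFn] at h1
    exact tendsto_nhds_unique h1 tendsto_const_nhds
  have hμ : (1 - Complex.I * μ : ℂ) ≠ 0 := by
    intro h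
    have := congrArg Complex.re h
    simp at this
  have hμn : ‖(1 - Complex.I * μ : ℂ)‖ = Real.sqrt (1 + μ ^ 2) := by
    rw [Complex.norm_def, Complex.normSq_apply]; simp [sq]
  set K₁ : ℝ := 2 / c * M * c ^ 4 with hK₁
  have hK₁0 : 0 ≤ K₁ := by positivity
  have hEg : (1 - Complex.I * μ) * (E / (1 - Complex.I * μ)) = E := by field_simp
  refine ⟨E / (1 - Complex.I * μ), ?_, ?_, c * max x₀ 1, ha, K₁ + 1, by positivity, ?_⟩
  · rw [norm_div, hEn, hμn, neg_div, Real.rpow_neg (by positivity), Real.sqrt_eq_rpow, one_div]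
  · generalize E / (1 - Complex.I * μ) = gp at *
    have hGd : ∀ x, c * max x₀ 1 ≤ x → HasDerivAt
        (fun x : ℝ => w x - gp * ((x : ℂ) * Complex.exp (-(Complex.I * μ * (Real.log x : ℂ)))))
        ((F x - E) * Complex.exp (-(Complex.I * μ * (Real.log x : ℂ)))) x := by
      intro x hx
      have hx0 : 0 < x := ha.trans_le hx
      have hxC : (x : ℂ) ≠ 0 := by exact_mod_cast hx0.ne'
      refine ((hwd x).sub (((hasDerivAt_id x).ofReal_comp.mul
        (hlog x hx0).neg.cexp).const_mul gp)).congr_deriv ?_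
      have h1 : Complex.exp (Complex.I * μ * (Real.log x : ℂ))
          * Complex.exp (-(Complex.I * μ * (Real.log x : ℂ))) = 1 := by
        rw [← Complex.exp_add]; simp
      rw [sub_mul, hF]
      simp only [id, Complex.ofReal_one, Pi.neg_apply]
      rw [mul_assoc (Complex.exp (φ x)), h1, ← hEg]
      field_simp
      ring
    obtain ⟨L, hL, -⟩ := exists_limit_of_norm_deriv_le 1 ha hK₁0 hGd (by
      intro x hx
      rw [norm_mul, hnlog', mul_one]
      exact hEb x hx)
    have hinv : Tendsto (fun x : ℝ => ‖((x : ℂ))⁻¹‖) atTop (𝓝 0) := by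
      have := (tendsto_inv_atTop_zero (𝕜 := ℝ)).norm
      simpa using this
    have h0 := hL.norm.mul hinv
    rw [mul_zero] at h0
    rw [tendsto_iff_norm_sub_tendsto_zero]
    refine h0.congr' ?_
    filter_upwards [eventually_gt_atTop 0] with x hx
    have hxC : (x : ℂ) ≠ 0 := by exact_mod_cast hx.ne'
    rw [hg x hx.ne', abs_of_pos hx, ← norm_mul, ← one_mul ‖_ * _‖, ← hnlog x, ← norm_mul]
    congr 1
    rw [Complex.exp_neg]
    have := Complex.exp_ne_zero (Complex.I * μ * (Real.log x : ℂ))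
    field_simp
  · intro x hx
    have hx0 : 0 < x := ha.trans_le hx
    rw [hEg, (hwd x).deriv]
    have h1 := hEb x hx
    rw [hF] at h1
    refine h1.trans ?_
    change K₁ * (x ^ 3)⁻¹ ≤ (K₁ + 1) * (x ^ 3)⁻¹
    gcongr
    linarith
end

section
/- Let c, φ ∈ ℝ and define Ψ : (−∞,0) → ℝ by Ψ(x) := (2/3)·(−x/3^{1/3})^{3/2} − (3/4)·c·ln(−x/3^{1/3}) + φ. Then the improper integrals ∫_{−∞}^{x} cos(2Ψ(y))·(−y)^{−5/2} dy and ∫_{−∞}^{x} sin(Ψ(y))·(−y)^{−13/4} dy converge for every x < 0, and as x → −∞ one has ∫_{−∞}^{x} cos(2Ψ(y))·(−y)^{−5/2} dy = O((−x)^{−3}) and ∫_{−∞}^{x} sin(Ψ(y))·(−y)^{−13/4} dy = O((−x)^{−15/4}). -/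
open MeasureTheory Set Filter Topology

lemma integrableOn_mul_rpow_of_bdd {g : ℝ → ℝ} {s T M : ℝ} (hs : 1 < s) (hT : 0 < T)
    (hg : ContinuousOn g (Ioi 0)) (hM : ∀ t, |g t| ≤ M) :
    IntegrableOn (fun t => g t * t ^ (-s)) (Ioi T) := by
  have h1 : IntegrableOn (fun t : ℝ => t ^ (-s)) (Ioi T) :=
    integrableOn_Ioi_rpow_of_lt (by linarith) hT
  refine h1.bdd_mul (c := M) ?_ (ae_of_all _ fun t => by simpa using hM t)
  exact (hg.mono (Ioi_subset_Ioi hT.le)).aestronglyMeasurable measurableSet_Ioi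

/-- The oscillatory estimate: oscillation with frequency of order `t^{1/2}` gains the factor
`T^{-3/2}` over the trivial bound `O(T^{1-s})`. -/
lemma osc_bound {θ : ℝ → ℝ} {α β s : ℝ} (hα : 0 < α) (hs : 1 < s)
    (hθ : ∀ t, 0 < t → HasDerivAt θ (α * t ^ ((1:ℝ)/2) - β / t) t) :
    (∀ T, 0 < T → IntegrableOn (fun t => Real.sin (θ t) * t ^ (-s)) (Ioi T)) ∧
    ∃ K : ℝ, 0 < K ∧ ∀ T, 0 < T →
      |∫ t in Ioi T, Real.sin (θ t) * t ^ (-s)| ≤ K * T ^ (-(s + 1/2)) := by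
  have hc : ContinuousOn θ (Ioi 0) := fun t ht => (hθ t ht).continuousAt.continuousWithinAt
  have hint : ∀ T, 0 < T → IntegrableOn (fun t => Real.sin (θ t) * t ^ (-s)) (Ioi T) :=
    fun T hT => integrableOn_mul_rpow_of_bdd hs hT (Real.continuous_sin.comp_continuousOn hc)
      (fun t => Real.abs_sin_le_one _)
  refine ⟨hint, ?_⟩
  set r : ℝ → ℝ := fun t => (-β * Real.sin (θ t) + (s + 1/2) * Real.cos (θ t)) / α with hr
  set M : ℝ := (|β| + (s + 1/2)) / α with hMdef
  have hM0 : 0 < M := by positivity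
  have hrM : ∀ t, |r t| ≤ M := by
    intro t
    rw [hr, hMdef]
    simp only [abs_div, abs_of_pos hα]
    gcongr
    refine (abs_add_le _ _).trans ?_
    rw [abs_mul, abs_mul, abs_neg, abs_of_pos (by linarith : 0 < s + 1/2)]
    have h1 := Real.abs_sin_le_one (θ t)
    have h2 := Real.abs_cos_le_one (θ t)
    have h3 := mul_le_mul_of_nonneg_left h1 (abs_nonneg β)
    have h4 := mul_le_mul_of_nonneg_left h2 (by linarith : 0 ≤ s + 1/2)
    linarith
  have hrc : ContinuousOn r (Ioi 0) := by
    have := Real.continuous_sin.comp_continuousOn hc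
    have := Real.continuous_cos.comp_continuousOn hc
    simp only [hr]
    fun_prop
  refine ⟨1 / α + M / (s + 1/2), by positivity, fun T hT => ?_⟩
  have hrint : IntegrableOn (fun t => r t * t ^ (-(s + 3/2))) (Ioi T) :=
    integrableOn_mul_rpow_of_bdd (by linarith) hT hrc hrM
  set G : ℝ → ℝ := fun t => -Real.cos (θ t) / α * t ^ (-(s + 1/2)) with hG
  have hGd : ∀ t ∈ Ici T, HasDerivAt G
      (Real.sin (θ t) * t ^ (-s) + r t * t ^ (-(s + 3/2))) t := by
    intro t ht
    have ht0 : 0 < t := hT.trans_le ht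
    have h := (((hθ t ht0).cos.neg).div_const α).mul
      (Real.hasDerivAt_rpow_const (p := -(s + 1/2)) (Or.inl ht0.ne'))
    refine h.congr_deriv ?_
    -- all powers are expressed through `t ^ (-(s + 3/2))`
    have e1 : t ^ (-(s + 1/2)) = t ^ (-(s + 3/2)) * t := by
      rw [← Real.rpow_add_one ht0.ne']; congr 1; ring
    have e2 : t ^ (-(s + 1/2) - 1) = t ^ (-(s + 3/2)) := by congr 1; ring
    have e3 : t ^ (-s) = t ^ (-(s + 3/2)) * t * t ^ ((1:ℝ)/2) := by
      rw [← Real.rpow_add_one ht0.ne', ← Real.rpow_add ht0]; congr 1; ring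
    rw [e1, e2, e3, hr]
    simp only [Pi.neg_apply]
    field_simp
    ring
  have hpow : Tendsto (fun t : ℝ => t ^ (-(s + 1/2))) atTop (𝓝 0) :=
    tendsto_rpow_neg_atTop (by linarith)
  have hbd : ∀ t, |(-Real.cos (θ t) / α)| ≤ 1 / α := by
    intro t
    rw [abs_div, abs_neg, abs_of_pos hα]
    gcongr
    exact Real.abs_cos_le_one _
  have hGlim : Tendsto G atTop (𝓝 0) := by
    refine squeeze_zero_norm' ?_ (by simpa only [mul_zero] using hpow.const_mul (1 / α))
    filter_upwards [eventually_gt_atTop 0] with t ht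
    rw [hG, Real.norm_eq_abs, abs_mul, abs_of_pos (Real.rpow_pos_of_pos ht _)]
    gcongr
    exact hbd t
  have hftc := integral_Ioi_of_hasDerivAt_of_tendsto' hGd ((hint T hT).add hrint) hGlim
  rw [integral_add (hint T hT) hrint] at hftc
  have hGT : |G T| ≤ 1 / α * T ^ (-(s + 1/2)) := by
    rw [hG, abs_mul, abs_of_pos (Real.rpow_pos_of_pos hT _)]
    gcongr
    exact hbd T
  have hR : |∫ t in Ioi T, r t * t ^ (-(s + 3/2))| ≤ M / (s + 1/2) * T ^ (-(s + 1/2)) := by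
    have hi : IntegrableOn (fun t : ℝ => M * t ^ (-(s + 3/2))) (Ioi T) :=
      (integrableOn_Ioi_rpow_of_lt (by linarith) hT).const_mul M
    have h1 : ‖∫ t in Ioi T, r t * t ^ (-(s + 3/2))‖ ≤ ∫ t in Ioi T, M * t ^ (-(s + 3/2)) := by
      refine norm_integral_le_of_norm_le hi ?_
      filter_upwards [ae_restrict_mem measurableSet_Ioi] with t ht
      have ht0 : 0 < t := hT.trans ht
      rw [Real.norm_eq_abs, abs_mul, abs_of_pos (Real.rpow_pos_of_pos ht0 _)]
      gcongr
      exact hrM t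
    rw [integral_const_mul, integral_Ioi_rpow_of_lt (by linarith) hT,
      show -(s + 3/2) + 1 = -(s + 1/2) by ring, neg_div_neg_eq] at h1
    calc _ ≤ _ := h1
      _ = _ := by ring
  rw [show ∫ t in Ioi T, Real.sin (θ t) * t ^ (-s)
      = -G T - ∫ t in Ioi T, r t * t ^ (-(s + 3/2)) by linarith]
  refine (abs_sub _ _).trans ?_
  rw [abs_neg]
  linarith

/-- The same estimate on a left half-line, with the phase given through its reflection. -/
lemma osc_bound_Iic {f θ : ℝ → ℝ} {α β s : ℝ} (hα : 0 < α) (hs : 1 < s)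
    (hθ : ∀ t, 0 < t → HasDerivAt θ (α * t ^ ((1:ℝ)/2) - β / t) t)
    (hf : ∀ y, f y = Real.sin (θ (-y)) * (-y) ^ (-s)) :
    (∀ x, x < 0 → IntegrableOn f (Iic x)) ∧
    ∃ x₁ : ℝ, 0 < x₁ ∧ ∃ K : ℝ, 0 < K ∧ ∀ x : ℝ, x ≤ -x₁ →
      |∫ y in Iic x, f y| ≤ K * (-x) ^ (-(s + 1/2)) := by
  obtain ⟨h1, K, hK, h2⟩ := osc_bound hα hs hθ
  obtain rfl : f = fun y => Real.sin (θ (-y)) * (-y) ^ (-s) := funext hf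
  refine ⟨fun x hx => ?_, 1, one_pos, K, hK, fun x hx => ?_⟩
  · rw [integrableOn_Iic_iff_integrableOn_Iio]
    have := (h1 (-x) (by linarith)).comp_neg
    simpa using this
  · rw [integral_comp_neg_Iic x (fun t => Real.sin (θ t) * t ^ (-s))]
    exact h2 (-x) (by linarith)

lemma hasDerivAt_phase (c φ : ℝ) (Ψ : ℝ → ℝ)
    (hΨ : ∀ x : ℝ, x < 0 → Ψ x =
      2/3 * ((-x) / cbrt3) ^ ((3:ℝ)/2) - 3/4 * c * Real.log ((-x) / cbrt3) + φ)
    (t : ℝ) (ht : 0 < t) :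
    HasDerivAt (fun t => Ψ (-t))
      (1 / (cbrt3 ^ ((1:ℝ)/2) * cbrt3) * t ^ ((1:ℝ)/2) - 3/4 * c / t) t := by
  have hk : 0 < cbrt3 := by unfold cbrt3; positivity
  have hd : HasDerivAt (fun u : ℝ => u / cbrt3) (1 / cbrt3) t := (hasDerivAt_id t).div_const _
  have h : HasDerivAt (fun u : ℝ => 2/3 * (u / cbrt3) ^ ((3:ℝ)/2)
      - 3/4 * c * Real.log (u / cbrt3) + φ)
      (1 / (cbrt3 ^ ((1:ℝ)/2) * cbrt3) * t ^ ((1:ℝ)/2) - 3/4 * c / t) t := by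
    have h0 := (((hd.rpow_const (p := (3:ℝ)/2) (Or.inl (by positivity))).const_mul (2/3)).sub
      ((hd.log (by positivity)).const_mul (3/4 * c))).add_const φ
    refine h0.congr_deriv ?_
    rw [show (3:ℝ)/2 - 1 = 1/2 by norm_num, Real.div_rpow ht.le hk.le]
    have : 0 < cbrt3 ^ ((1:ℝ)/2) := by positivity
    field_simp
  refine h.congr_of_eventuallyEq ?_
  filter_upwards [lt_mem_nhds ht] with u hu
  rw [hΨ (-u) (by linarith), neg_neg]

/-- Oscillatory integral estimates: for the phase
`Ψ(x) = (2/3)(-x/3^{1/3})^{3/2} - (3/4) c ln(-x/3^{1/3}) + φ`, the improper integrals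
`∫_{-∞}^x cos(2Ψ(y))(-y)^{-5/2} dy` and `∫_{-∞}^x sin(Ψ(y))(-y)^{-13/4} dy` converge for
every `x < 0`, and are `O((-x)^{-3})` resp. `O((-x)^{-15/4})` as `x → -∞`. -/
theorem stmt_11 (c φ : ℝ) (Ψ : ℝ → ℝ)
    (hΨ : ∀ x : ℝ, x < 0 → Ψ x =
      2/3 * ((-x) / cbrt3) ^ ((3:ℝ)/2) - 3/4 * c * Real.log ((-x) / cbrt3) + φ) :
    (∀ x : ℝ, x < 0 → MeasureTheory.IntegrableOn
      (fun y : ℝ => Real.cos (2 * Ψ y) * (-y) ^ (-(5:ℝ)/2)) (Set.Iic x)) ∧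
    (∀ x : ℝ, x < 0 → MeasureTheory.IntegrableOn
      (fun y : ℝ => Real.sin (Ψ y) * (-y) ^ (-(13:ℝ)/4)) (Set.Iic x)) ∧
    (∃ x₁ : ℝ, 0 < x₁ ∧ ∃ K : ℝ, 0 < K ∧ ∀ x : ℝ, x ≤ -x₁ →
      |∫ y in Set.Iic x, Real.cos (2 * Ψ y) * (-y) ^ (-(5:ℝ)/2)|
        ≤ K * (-x) ^ (-(3:ℝ))) ∧
    (∃ x₁ : ℝ, 0 < x₁ ∧ ∃ K : ℝ, 0 < K ∧ ∀ x : ℝ, x ≤ -x₁ →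
      |∫ y in Set.Iic x, Real.sin (Ψ y) * (-y) ^ (-(13:ℝ)/4)|
        ≤ K * (-x) ^ (-(15:ℝ)/4)) := by
  have hk : 0 < cbrt3 := by unfold cbrt3; positivity
  have hd := hasDerivAt_phase c φ Ψ hΨ
  set α : ℝ := 1 / (cbrt3 ^ ((1:ℝ)/2) * cbrt3) with hα
  have hα0 : 0 < α := by positivity
  have hd2 : ∀ t, 0 < t → HasDerivAt (fun t => 2 * Ψ (-t) + Real.pi / 2)
      (2 * α * t ^ ((1:ℝ)/2) - 2 * (3/4 * c) / t) t := fun t ht =>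
    (((hd t ht).const_mul 2).add_const _).congr_deriv (by ring)
  obtain ⟨a1, a2⟩ := osc_bound_Iic (f := fun y : ℝ => Real.cos (2 * Ψ y) * (-y) ^ (-(5:ℝ)/2))
    (s := 5/2) (by positivity : 0 < 2 * α) (by norm_num) hd2
    (fun y => by rw [Real.sin_add_pi_div_two, neg_neg, neg_div])
  obtain ⟨b1, b2⟩ := osc_bound_Iic (f := fun y : ℝ => Real.sin (Ψ y) * (-y) ^ (-(13:ℝ)/4))
    (s := 13/4) hα0 (by norm_num) hd
    (fun y => by rw [neg_neg, neg_div])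
  rw [show -((5:ℝ)/2 + 1/2) = -3 by norm_num] at a2
  rw [show -((13:ℝ)/4 + 1/2) = -15/4 by norm_num] at b2
  exact ⟨a1, b1, a2, b2⟩
end

section
/- Let μ ∈ ℝ, set α := −iμ/2, and let u : ℝ → ℂ be a smooth solution of the PII equation u''(x) = x·u(x) + 2·u(x)³ − α on ℝ, taking purely imaginary values on ℝ and satisfying the asymptotic expansion (A−): there exist d ∈ iℝ, φ ∈ ℝ and x₀, K > 0 such that |u(x) − α/x − d·(−x)^{−1/4}·sin( (2/3)(−x)^{3/2} − (3/4)·d²·ln(−x) + φ )| ≤ K·(−x)^{−7/4} for all x ≤ −x₀. Define w(x) := ∫₀ˣ exp( (2/3^{1/3}) ∫₀^y u(z/3^{1/3}) dz ) dy − C with C := (2·3^{1/3}/(1−iμ))·(u'(0) − u(0)²), and g(x) := e^{iμ·ln|x|}·w(x)/x for x ≠ 0. Then there exists g₋ ∈ ℂ such that lim_{x→−∞} g(x) = g₋ and w'(x)·e^{iμ·ln|x|} = (1−iμ)·g₋ + O((−x)^{−3/4}) as x → −∞. -/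
open Filter Topology

/-- Mean value inequality against the power `K t^p`, `p ≠ -1`. -/
lemma norm_sub_le_of_deriv_le_rpow {f f' : ℝ → ℂ} {T K p : ℝ} (hT : 0 < T) (hp : p + 1 ≠ 0)
    (hf : ∀ t, T ≤ t → HasDerivAt f (f' t) t) (hb : ∀ t, T ≤ t → ‖f' t‖ ≤ K * t ^ p)
    {s t : ℝ} (hs : T ≤ s) (hst : s ≤ t) :
    ‖f t - f s‖ ≤ K / (p + 1) * (t ^ (p + 1) - s ^ (p + 1)) := by
  have hB : ∀ x, 0 < x → HasDerivAt (fun x => K / (p + 1) * (x ^ (p + 1) - s ^ (p + 1)))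
      (K * x ^ p) x := by
    intro x hx
    have h := ((Real.hasDerivAt_rpow_const (x := x) (p := p + 1) (Or.inl hx.ne')).sub_const
      (s ^ (p + 1))).const_mul (K / (p + 1))
    refine h.congr_deriv ?_
    rw [add_sub_cancel_right]
    field_simp
  have hderiv : ∀ x, T ≤ x → HasDerivAt (fun x => f x - f s) (f' x) x :=
    fun x hx => (hf x hx).sub_const _
  refine image_norm_le_of_norm_deriv_right_le_deriv_boundary' (a := s) (b := t)
    (f := fun x => f x - f s) (f' := f')
    (B := fun x => K / (p + 1) * (x ^ (p + 1) - s ^ (p + 1))) (B' := fun x => K * x ^ p)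
    ?_ ?_ ?_ ?_ ?_ ?_ ⟨hst, le_rfl⟩
  · exact fun x hx => (hderiv x (hs.trans hx.1)).continuousAt.continuousWithinAt
  · exact fun x hx => (hderiv x (hs.trans hx.1)).hasDerivWithinAt
  · simp
  · exact fun x hx => (hB x (by linarith [hx.1])).continuousAt.continuousWithinAt
  · exact fun x hx => (hB x (by linarith [hx.1])).hasDerivWithinAt
  · exact fun x hx => hb x (hs.trans hx.1)

/-- A function with derivative `O(t^{-7/4})` converges at infinity, with rate `t^{-3/4}`. -/
lemma exists_limit_of_deriv_le {f f' : ℝ → ℂ} {T K : ℝ} (hT : 0 < T) (hK : 0 ≤ K)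
    (hf : ∀ t, T ≤ t → HasDerivAt f (f' t) t)
    (hb : ∀ t, T ≤ t → ‖f' t‖ ≤ K * t ^ (-(7:ℝ)/4)) :
    ∃ L : ℂ, ∀ t, T ≤ t → ‖f t - L‖ ≤ 4/3 * K * t ^ (-(3:ℝ)/4) := by
  have key : ∀ s t, T ≤ s → s ≤ t → ‖f t - f s‖ ≤ 4/3 * K * s ^ (-(3:ℝ)/4) := by
    intro s t hs hst
    have h := norm_sub_le_of_deriv_le_rpow hT (by norm_num) hf hb hs hst
    rw [show (-(7:ℝ)/4 + 1) = -(3:ℝ)/4 by norm_num] at h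
    have : 0 ≤ K * t ^ (-(3:ℝ)/4) :=
      mul_nonneg hK (Real.rpow_nonneg (by linarith) _)
    have e : K / (-(3:ℝ)/4) * (t ^ (-(3:ℝ)/4) - s ^ (-(3:ℝ)/4))
      = 4/3 * K * s ^ (-(3:ℝ)/4) - 4/3 * (K * t ^ (-(3:ℝ)/4)) := by ring
    rw [e] at h
    linarith
  have hpow : Tendsto (fun t : ℝ => t ^ (-(3:ℝ)/4)) atTop (𝓝 0) := by
    have := tendsto_rpow_neg_atTop (y := (3:ℝ)/4) (by norm_num)
    simpa [neg_div] using this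
  have hmax : Tendsto (fun t : ℝ => max t T) atTop atTop :=
    tendsto_atTop_mono (fun t => le_max_left t T) tendsto_id
  have hcau : CauchySeq (fun t : ℝ => f (max t T)) := by
    refine cauchySeq_of_le_tendsto_0 (fun t => 2 * (4/3 * K * (max t T) ^ (-(3:ℝ)/4))) ?_ ?_
    · intro n m N hn hm
      have h1 := key (max N T) (max n T) (le_max_right _ _) (max_le_max_right _ hn)
      have h2 := key (max N T) (max m T) (le_max_right _ _) (max_le_max_right _ hm)
      rw [← dist_eq_norm] at h1 h2
      have := dist_triangle_right (f (max n T)) (f (max m T)) (f (max N T))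
      linarith
    · simpa using ((hpow.comp hmax).const_mul (4/3 * K)).const_mul 2
  obtain ⟨L, hL⟩ := cauchySeq_tendsto_of_complete hcau
  refine ⟨L, fun s hs => ?_⟩
  have hlim : Tendsto (fun t => ‖f (max t T) - f s‖) atTop (𝓝 ‖L - f s‖) :=
    (hL.sub_const _).norm
  rw [norm_sub_rev]
  refine le_of_tendsto hlim ?_
  filter_upwards [eventually_ge_atTop s] with t ht
  exact key s _ hs (ht.trans (le_max_left _ _))

/-- The oscillatory part `t^{-1/4} sin θ` has the approximate primitive `-t^{-3/4} cos θ`. -/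
lemma hasDerivAt_osc (k φ : ℝ) {t : ℝ} (ht : 0 < t) :
    HasDerivAt (fun t : ℝ => t ^ (-(3:ℝ)/4) *
        Real.cos (2/3 * t ^ ((3:ℝ)/2) + k * Real.log t + φ))
      (-(t ^ (-(1:ℝ)/4) * Real.sin (2/3 * t ^ ((3:ℝ)/2) + k * Real.log t + φ))
        + t ^ (-(7:ℝ)/4) * (-(3/4) * Real.cos (2/3 * t ^ ((3:ℝ)/2) + k * Real.log t + φ)
          - k * Real.sin (2/3 * t ^ ((3:ℝ)/2) + k * Real.log t + φ))) t := by
  have h1 := Real.hasDerivAt_rpow_const (x := t) (p := -(3:ℝ)/4) (Or.inl ht.ne')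
  have h2 := Real.hasDerivAt_rpow_const (x := t) (p := (3:ℝ)/2) (Or.inl ht.ne')
  have h3 := Real.hasDerivAt_log ht.ne'
  have hθ := (((h2.const_mul (2/3)).add (h3.const_mul k)).add_const φ)
  have h := h1.mul hθ.cos
  refine h.congr_deriv ?_
  have e1 : t ^ (-(1:ℝ)/4) = t ^ (-(3:ℝ)/4) * t ^ ((3:ℝ)/2 - 1) := by
    rw [← Real.rpow_add ht]; norm_num
  have e2 : t ^ (-(7:ℝ)/4) = t ^ (-(3:ℝ)/4) * t⁻¹ := by
    rw [← Real.rpow_neg_one, ← Real.rpow_add ht]; norm_num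
  have e3 : t ^ (-(3:ℝ)/4 - 1) = t ^ (-(3:ℝ)/4) * t⁻¹ := by
    rw [← e2]; norm_num
  simp only [Pi.add_apply]
  rw [e3, e1, e2]
  ring

/-- Logarithmic asymptotics of `2 ∫₀^{-t} u`, from the expansion of `u`. -/
lemma exists_log_limit (μ : ℝ) (α : ℂ) (hα : α = -Complex.I * μ / 2)
    (u : ℝ → ℂ) (hu : Continuous u) (d : ℂ) (hd : d.re = 0) (φ x₀ : ℝ) (hx₀ : 0 < x₀)
    (K : ℝ) (hK : 0 < K)
    (hA : ∀ x : ℝ, x ≤ -x₀ →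
        ‖u x - α / x - d * (((-x) ^ (-(1:ℝ)/4) : ℝ) : ℂ) *
          Complex.sin (((2/3 * (-x) ^ ((3:ℝ)/2) : ℝ) : ℂ)
            - 3/4 * d ^ 2 * (Real.log (-x) : ℂ) + (φ : ℂ))‖
          ≤ K * (-x) ^ (-(7:ℝ)/4)) :
    ∃ L : ℂ, ∃ M : ℝ, 0 < M ∧ ∀ t, x₀ ≤ t →
      ‖2 * (∫ z in (0:ℝ)..(-t), u z) + Complex.I * μ * Real.log t - L‖
        ≤ M * t ^ (-(3:ℝ)/4) := by
  obtain ⟨k, hk⟩ : ∃ k : ℝ, (k : ℂ) = -(3/4 * d ^ 2) := by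
    refine ⟨3/4 * d.im ^ 2, ?_⟩
    have : d = d.im * Complex.I := by
      apply Complex.ext <;> simp [hd]
    rw [this]
    simp [mul_pow]
  set θ : ℝ → ℝ := fun t => 2/3 * t ^ ((3:ℝ)/2) + k * Real.log t + φ with hθ
  have hA' : ∀ t, x₀ ≤ t → ‖u (-t) + α / t - d * ((t ^ (-(1:ℝ)/4) * Real.sin (θ t) : ℝ) : ℂ)‖
      ≤ K * t ^ (-(7:ℝ)/4) := by
    intro t ht
    have h := hA (-t) (by linarith)
    rw [neg_neg] at h
    convert h using 2
    have : (((2/3 * t ^ ((3:ℝ)/2) : ℝ) : ℂ) - 3/4 * d ^ 2 * (Real.log t : ℂ) + (φ : ℂ))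
        = ((θ t : ℝ) : ℂ) := by
      simp only [hθ]; push_cast; rw [hk]; ring
    rw [this]
    push_cast
    ring
  set R : ℝ → ℝ := fun t => t ^ (-(7:ℝ)/4) * (-(3/4) * Real.cos (θ t) - k * Real.sin (θ t)) with hR
  have hosc : ∀ t, x₀ ≤ t → HasDerivAt (fun t : ℝ => ((t ^ (-(3:ℝ)/4) * Real.cos (θ t) : ℝ) : ℂ))
      ((-(t ^ (-(1:ℝ)/4) * Real.sin (θ t)) + R t : ℝ) : ℂ) t :=
    fun t ht => (hasDerivAt_osc k φ (hx₀.trans_le ht)).ofReal_comp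
  have hint : ∀ t, HasDerivAt (fun t : ℝ => ∫ z in (0:ℝ)..(-t), u z) (-u (-t)) t := by
    intro t
    have h1 : HasDerivAt (fun s : ℝ => ∫ z in (0:ℝ)..s, u z) (u (-t)) (-t) :=
      intervalIntegral.integral_hasDerivAt_right (hu.intervalIntegrable _ _)
        (hu.stronglyMeasurableAtFilter _ _) hu.continuousAt
    exact (h1.scomp t (hasDerivAt_neg t)).congr_deriv (by simp)
  have hV : ∀ t, x₀ ≤ t → HasDerivAt (fun t : ℝ => 2 * (∫ z in (0:ℝ)..(-t), u z)
      + Complex.I * μ * Real.log t - 2 * d * ((t ^ (-(3:ℝ)/4) * Real.cos (θ t) : ℝ) : ℂ))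
      (-2 * (u (-t) + α / t - d * ((t ^ (-(1:ℝ)/4) * Real.sin (θ t) : ℝ) : ℂ))
        - 2 * d * R t) t := by
    intro t ht
    have hl := (Real.hasDerivAt_log (hx₀.trans_le ht).ne').ofReal_comp
    have h := (((hint t).const_mul 2).add (hl.const_mul (Complex.I * μ))).sub
      ((hosc t ht).const_mul (2 * d))
    refine h.congr_deriv ?_
    rw [hα]
    push_cast
    ring
  have hRb : ∀ t, x₀ ≤ t → ‖(R t : ℂ)‖ ≤ (3/4 + |k|) * t ^ (-(7:ℝ)/4) := by
    intro t ht
    have h0 : 0 ≤ t ^ (-(7:ℝ)/4) := Real.rpow_nonneg (by linarith) _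
    rw [Complex.norm_real, Real.norm_eq_abs, hR, abs_mul, abs_of_nonneg h0, mul_comm]
    refine mul_le_mul_of_nonneg_right ?_ h0
    refine (abs_sub _ _).trans ?_
    rw [abs_mul, abs_mul]
    have h1 := Real.abs_cos_le_one (θ t)
    have h2 := Real.abs_sin_le_one (θ t)
    have h3 : |(-(3/4) : ℝ)| = 3/4 := by norm_num
    rw [h3]
    have := mul_le_mul_of_nonneg_left h2 (abs_nonneg k)
    linarith
  obtain ⟨L, hL⟩ := exists_limit_of_deriv_le (K := 2 * K + 2 * ‖d‖ * (3/4 + |k|)) hx₀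
    (by positivity) hV (by
      intro t ht
      refine (norm_sub_le _ _).trans ?_
      have e1 := hA' t ht
      have e2 := mul_le_mul_of_nonneg_left (hRb t ht) (norm_nonneg d)
      rw [norm_mul, norm_mul, norm_mul]
      simp only [norm_neg, Complex.norm_ofNat]
      nlinarith)
  refine ⟨L, 4/3 * (2 * K + 2 * ‖d‖ * (3/4 + |k|)) + 2 * ‖d‖, by positivity, fun t ht => ?_⟩
  have h0 : 0 ≤ t ^ (-(3:ℝ)/4) := Real.rpow_nonneg (by linarith) _
  have h1 := hL t ht
  have h2 : ‖2 * d * ((t ^ (-(3:ℝ)/4) * Real.cos (θ t) : ℝ) : ℂ)‖ ≤ 2 * ‖d‖ * t ^ (-(3:ℝ)/4) := by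
    rw [norm_mul, norm_mul, Complex.norm_real, Real.norm_eq_abs, abs_mul, abs_of_nonneg h0,
      Complex.norm_ofNat]
    refine mul_le_mul_of_nonneg_left ?_ (by positivity)
    exact mul_le_of_le_one_right h0 (Real.abs_cos_le_one _)
  calc _ = ‖(2 * (∫ z in (0:ℝ)..(-t), u z)
      + Complex.I * μ * Real.log t - 2 * d * ((t ^ (-(3:ℝ)/4) * Real.cos (θ t) : ℝ) : ℂ) - L)
      + 2 * d * ((t ^ (-(3:ℝ)/4) * Real.cos (θ t) : ℝ) : ℂ)‖ := by congr 1; ring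
    _ ≤ _ := norm_add_le _ _
    _ ≤ _ := by rw [add_mul]; exact add_le_add h1 h2

/-- Integrating `w'(-t) t^{iμ} = P + O(t^{-3/4})` gives `w(-t) t^{iμ} / (-t) → P / (1 - iμ)`. -/
lemma tendsto_of_deriv_asymp (μ : ℝ) (w w' : ℝ → ℂ) (hw : ∀ x, HasDerivAt w (w' x) x)
    (P : ℂ) {T K : ℝ} (hT : 0 < T) (hK : 0 < K)
    (hb : ∀ t, T ≤ t →
      ‖w' (-t) * Complex.exp (Complex.I * μ * Real.log t) - P‖ ≤ K * t ^ (-(3:ℝ)/4)) :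
    Tendsto (fun t : ℝ => Complex.exp (Complex.I * μ * Real.log t) * w (-t) / ((-t : ℝ) : ℂ))
      atTop (𝓝 (P / (1 - Complex.I * μ))) := by
  have hne : (1 - Complex.I * μ : ℂ) ≠ 0 := by
    intro h
    have := congrArg Complex.re h
    simp at this
  set Q := P / (1 - Complex.I * μ) with hQ
  have hP : P = (1 - Complex.I * μ) * Q := by rw [hQ]; field_simp
  have hnorm : ∀ t : ℝ, ‖Complex.exp (Complex.I * μ * Real.log t)‖ = 1 := by
    intro t
    rw [Complex.norm_exp]
    simp
  set D : ℝ → ℂ := fun t => w (-t) + Q * (t * Complex.exp (-(Complex.I * μ * Real.log t))) with hD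
  have hDd : ∀ t, T ≤ t → HasDerivAt D
      (-w' (-t) + P * Complex.exp (-(Complex.I * μ * Real.log t))) t := by
    intro t ht
    have ht0 : (t : ℂ) ≠ 0 := by exact_mod_cast (hT.trans_le ht).ne'
    have h1 : HasDerivAt (fun t : ℝ => w (-t)) (-w' (-t)) t := by
      exact ((hw (-t)).scomp t (hasDerivAt_neg t)).congr_deriv (by simp)
    have hl := (Real.hasDerivAt_log (hT.trans_le ht).ne').ofReal_comp
    have he := ((hl.const_mul (Complex.I * μ)).neg).cexp
    have hid := (hasDerivAt_id t).ofReal_comp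
    have h := h1.add ((hid.mul he).const_mul Q)
    refine h.congr_deriv ?_
    rw [hP]
    simp only [id, Pi.neg_apply]
    push_cast
    field_simp
    ring
  have hDb : ∀ t, T ≤ t → ‖-w' (-t) + P * Complex.exp (-(Complex.I * μ * Real.log t))‖
      ≤ K * t ^ (-(3:ℝ)/4) := by
    intro t ht
    refine le_trans (le_of_eq ?_) (hb t ht)
    have : w' (-t) * Complex.exp (Complex.I * μ * Real.log t) - P
        = -((-w' (-t) + P * Complex.exp (-(Complex.I * μ * Real.log t)))
          * Complex.exp (Complex.I * μ * Real.log t)) := by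
      rw [add_mul, mul_assoc P, ← Complex.exp_add]
      simp
      ring
    rw [this, norm_neg, norm_mul, hnorm, mul_one]
  have hDle : ∀ t, T ≤ t → ‖D t‖ ≤ ‖D T‖ + 4 * K * t ^ ((1:ℝ)/4) := by
    intro t ht
    have h := norm_sub_le_of_deriv_le_rpow hT (by norm_num) hDd hDb le_rfl ht
    rw [show (-(3:ℝ)/4 + 1) = (1:ℝ)/4 by norm_num] at h
    have h0 : 0 ≤ K * T ^ ((1:ℝ)/4) := by positivity
    have h2 := norm_le_norm_add_norm_sub' (D t) (D T)
    have e : K / ((1:ℝ)/4) * (t ^ ((1:ℝ)/4) - T ^ ((1:ℝ)/4))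
        = 4 * K * t ^ ((1:ℝ)/4) - 4 * (K * T ^ ((1:ℝ)/4)) := by ring
    linarith
  rw [tendsto_iff_norm_sub_tendsto_zero]
  have hlim : Tendsto (fun t : ℝ => ‖D T‖ * t⁻¹ + 4 * K * t ^ (-(3:ℝ)/4)) atTop (𝓝 0) := by
    have h1 := tendsto_rpow_neg_atTop (y := (3:ℝ)/4) (by norm_num)
    have h2 := (tendsto_inv_atTop_zero (𝕜 := ℝ)).const_mul ‖D T‖
    have h3 := h2.add (h1.const_mul (4 * K))
    simpa [neg_div] using h3
  refine squeeze_zero' (Eventually.of_forall fun t => norm_nonneg _) ?_ hlim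
  filter_upwards [eventually_ge_atTop T] with t ht
  have ht' : 0 < t := hT.trans_le ht
  have ht0 : (t : ℂ) ≠ 0 := by exact_mod_cast ht'.ne'
  have e : Complex.exp (Complex.I * μ * Real.log t) * w (-t) / ((-t : ℝ) : ℂ) - Q
      = -(Complex.exp (Complex.I * μ * Real.log t) * D t * (t : ℂ)⁻¹) := by
    simp only [hD, Complex.exp_neg]
    have := Complex.exp_ne_zero (Complex.I * μ * Real.log t)
    push_cast
    field_simp
    ring
  rw [e, norm_neg, norm_mul, norm_mul, hnorm, one_mul, norm_inv, Complex.norm_real,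
    Real.norm_of_nonneg ht'.le]
  have e2 : t ^ (-(3:ℝ)/4) = t ^ ((1:ℝ)/4) * t⁻¹ := by
    rw [← Real.rpow_neg_one, ← Real.rpow_add ht']; norm_num
  rw [e2, ← mul_assoc, ← add_mul]
  exact mul_le_mul_of_nonneg_right (hDle t ht) (by positivity)

/-- There exists `g₋` such that `g(x) → g₋` as `x → -∞` and
`w'(x) e^{iμ ln|x|} = (1-iμ) g₋ + O((-x)^{-3/4})` as `x → -∞`. -/
theorem stmt_12 (μ : ℝ) (α : ℂ) (hα : α = -Complex.I * μ / 2)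
    (u : ℝ → ℂ) (hu : ContDiff ℝ (⊤ : ℕ∞) u)
    (hP : ∀ x : ℝ, deriv (deriv u) x = (x : ℂ) * u x + 2 * (u x) ^ 3 - α)
    (him : ∀ x : ℝ, (u x).re = 0)
    (hAm : ∃ d : ℂ, d.re = 0 ∧ ∃ φ : ℝ, ∃ x₀ : ℝ, 0 < x₀ ∧ ∃ K : ℝ, 0 < K ∧
      ∀ x : ℝ, x ≤ -x₀ →
        ‖u x - α / x - d * (((-x) ^ (-(1:ℝ)/4) : ℝ) : ℂ) *
          Complex.sin (((2/3 * (-x) ^ ((3:ℝ)/2) : ℝ) : ℂ)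
            - 3/4 * d ^ 2 * (Real.log (-x) : ℂ) + (φ : ℂ))‖
          ≤ K * (-x) ^ (-(7:ℝ)/4))
    (Cc : ℂ)
    (hC : Cc = (2 * cbrt3 / (1 - Complex.I * μ)) * (deriv u 0 - (u 0) ^ 2))
    (w : ℝ → ℂ)
    (hw : ∀ x : ℝ, w x =
      (∫ y in (0:ℝ)..x, Complex.exp (((2 / cbrt3 : ℝ) : ℂ) *
        ∫ z in (0:ℝ)..y, u (z / cbrt3))) - Cc)
    (g : ℝ → ℂ)
    (hg : ∀ x : ℝ, x ≠ 0 →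
      g x = Complex.exp (Complex.I * μ * Real.log |x|) * w x / x) :
    ∃ gm : ℂ, Filter.Tendsto g Filter.atBot (nhds gm) ∧
      ∃ x₁ : ℝ, 0 < x₁ ∧ ∃ K' : ℝ, 0 < K' ∧ ∀ x : ℝ, x ≤ -x₁ →
        ‖deriv w x * Complex.exp (Complex.I * μ * Real.log |x|)
          - (1 - Complex.I * μ) * gm‖ ≤ K' * (-x) ^ (-(3:ℝ)/4) := by
  obtain ⟨d, hd, φ, x₀, hx₀, K, hK, hA⟩ := hAm
  have huc : Continuous u := hu.continuous
  have hc : 0 < cbrt3 := by unfold cbrt3; positivity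
  have hcC : (cbrt3 : ℂ) ≠ 0 := by exact_mod_cast hc.ne'
  have hne : (1 - Complex.I * μ : ℂ) ≠ 0 := by
    intro h
    have := congrArg Complex.re h
    simp at this
  -- The exponent of `w'` is `2 ∫₀^{y/c} u` after rescaling.
  set w' : ℝ → ℂ := fun y => Complex.exp (2 * ∫ z in (0:ℝ)..(y / cbrt3), u z) with hw'
  have hexp : ∀ y : ℝ, Complex.exp (((2 / cbrt3 : ℝ) : ℂ) * ∫ z in (0:ℝ)..y, u (z / cbrt3))
      = w' y := by
    intro y
    rw [hw', intervalIntegral.integral_comp_div u hc.ne', zero_div, Complex.real_smul]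
    congr 1
    push_cast
    field_simp
  have hw'c : Continuous w' := by
    have h1 : Continuous (fun s : ℝ => ∫ z in (0:ℝ)..s, u z) :=
      intervalIntegral.continuous_primitive (fun a b => huc.intervalIntegrable a b) 0
    have h2 := h1.comp (continuous_id.div_const cbrt3)
    exact Complex.continuous_exp.comp (continuous_const.mul h2)
  have hwd : ∀ x, HasDerivAt w (w' x) x := by
    intro x
    have e : w = fun x => (∫ y in (0:ℝ)..x, w' y) - Cc := by
      funext x; rw [hw x]; simp only [hexp]
    rw [e]
    exact (intervalIntegral.integral_hasDerivAt_right (hw'c.intervalIntegrable _ _)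
        (hw'c.stronglyMeasurableAtFilter _ _) hw'c.continuousAt).sub_const _
  obtain ⟨L, M, hM, hL⟩ := exists_log_limit μ α hα u huc d hd φ x₀ hx₀ K hK hA
  set P := Complex.exp (L + Complex.I * μ * Real.log cbrt3) with hPdef
  -- Beyond some threshold the error in the exponent is at most `1`.
  obtain ⟨T₀, hT₀⟩ : ∃ T₀, ∀ t, T₀ ≤ t → M * t ^ (-(3:ℝ)/4) ≤ 1 := by
    have h1 := (tendsto_rpow_neg_atTop (y := (3:ℝ)/4) (by norm_num)).const_mul M
    rw [mul_zero] at h1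
    obtain ⟨T₀, h⟩ := eventually_atTop.1 (h1.eventually_le_const one_pos)
    exact ⟨T₀, fun t ht => by simpa [neg_div] using h t ht⟩
  set T := cbrt3 * max x₀ T₀ with hTdef
  have hTpos : 0 < T := mul_pos hc (hx₀.trans_le (le_max_left _ _))
  set K' := ‖P‖ * (2 * M) * (cbrt3 ^ (-(3:ℝ)/4))⁻¹ with hK'def
  have hK' : 0 < K' := by
    have : 0 < ‖P‖ := norm_pos_iff.2 (Complex.exp_ne_zero _)
    positivity
  have main : ∀ t, T ≤ t →
      ‖w' (-t) * Complex.exp (Complex.I * μ * Real.log t) - P‖ ≤ K' * t ^ (-(3:ℝ)/4) := by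
    intro t ht
    have htp : 0 < t := hTpos.trans_le ht
    obtain ⟨s, rfl⟩ : ∃ s, t = cbrt3 * s := ⟨t / cbrt3, by field_simp⟩
    have hs : max x₀ T₀ ≤ s := le_of_mul_le_mul_left ht hc
    have hs1 := (le_max_left _ _).trans hs
    have hs2 := (le_max_right _ _).trans hs
    have hsp : 0 < s := hx₀.trans_le hs1
    set δ := 2 * (∫ z in (0:ℝ)..(-s), u z) + Complex.I * μ * Real.log s - L with hδ
    have hδb : ‖δ‖ ≤ M * s ^ (-(3:ℝ)/4) := hL s hs1
    have e : w' (-(cbrt3 * s)) * Complex.exp (Complex.I * μ * Real.log (cbrt3 * s)) - P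
        = P * (Complex.exp δ - 1) := by
      have : -(cbrt3 * s) / cbrt3 = -s := by field_simp
      simp only [hw']
      rw [this, ← Complex.exp_add, mul_sub, hPdef, ← Complex.exp_add, mul_one,
        Real.log_mul hc.ne' hsp.ne', hδ]
      congr 2
      push_cast
      ring
    rw [e, norm_mul]
    have h1 := Complex.norm_exp_sub_one_le (hδb.trans (hT₀ s hs2))
    have h2 : (cbrt3 * s) ^ (-(3:ℝ)/4) = cbrt3 ^ (-(3:ℝ)/4) * s ^ (-(3:ℝ)/4) :=
      Real.mul_rpow hc.le hsp.le
    have h3 : cbrt3 ^ (-(3:ℝ)/4) ≠ 0 := (Real.rpow_pos_of_pos hc _).ne'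
    have h4 : K' * (cbrt3 * s) ^ (-(3:ℝ)/4) = ‖P‖ * (2 * (M * s ^ (-(3:ℝ)/4))) := by
      rw [h2, hK'def]
      field_simp
    rw [h4]
    exact mul_le_mul_of_nonneg_left (by linarith) (norm_nonneg _)
  refine ⟨P / (1 - Complex.I * μ), ?_, T, hTpos, K', hK', ?_⟩
  · have h := tendsto_of_deriv_asymp μ w w' hwd P hTpos hK' main
    have h2 := h.comp tendsto_neg_atBot_atTop
    refine h2.congr' ?_
    filter_upwards [eventually_lt_atBot (0:ℝ)] with x hx
    rw [hg x hx.ne, abs_of_neg hx]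
    simp
  · intro x hx
    have h := main (-x) (by linarith)
    rw [neg_neg] at h
    rw [(hwd x).deriv, abs_of_neg (by linarith), mul_div_cancel₀ _ hne]
    exact h
end
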